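/- Let X be a tree and p ∈ X. Then (X,p) has unique hyperspace C(p,X) in the class 𝒯 of trees; that is, for every tree Y and q ∈ Y such that C(p,X) is homeomorphic to C(q,Y), there is a homeomorphism 𝔥 : X → Y with 𝔥(p) = q. -/

import Mathlib

/-!
A tree rooted at `p` with branches `i, j, …`, one for each leaf, is determined up to homeomorphism
by the heights `b i j` at which its branches separate, and only the order of these heights matters.
A subcontinuum containing `p` is the same as the family of heights up to which it contains the
branches, so `C(p, X)` is a space of subtrees which can be written down in terms of `b`.

A subtree partitions the branches according to whether they have already separated inside it. The
number of classes of this partition is the local dimension of `C(p, X)` at the subtree: a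
neighbourhood embeds in a cube of that dimension and contains such a cube. By invariance of
dimension, which follows from the Poincaré–Miranda theorem, it is preserved by homeomorphisms.
Since partitions can only get coarser at nearby subtrees, moving along a monotone path of subtrees
shows that a homeomorphism also preserves the order of the partitions by refinement.

In this finite ordered set, the lower covers of a partition `S` split exactly one class of `S`
which is not a singleton, at its lowest separation point. Hence the number of singleton classes of
`S` is its number of classes minus its number of lower covers. Counting singleton classes matches
the leaves of both trees, and the least upper bounds of pairs of leaf strata match the order of the
separation heights.
-/

open Set Topology TopologicalSpace

universe u

/-- `IndDimLE m α t` means that the small inductive dimension of `α` is at most `m - 1`.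
In particular `IndDimLE 0 α t` means `α` is empty (dimension `-1`). -/
def IndDimLE : ℕ → (α : Type u) → TopologicalSpace α → Prop
  | 0, α, _ => IsEmpty α
  | n + 1, α, t =>
      ∀ (x : α) (U : Set α), @IsOpen α t U → x ∈ U →
        ∃ V : Set α, @IsOpen α t V ∧ x ∈ V ∧ V ⊆ U ∧
          IndDimLE n (↥(@frontier α t V))
            (TopologicalSpace.induced (Subtype.val : ↥(@frontier α t V) → α) t)

/-- The small inductive dimension of a topological space, as an integer
(with junk value if the dimension is infinite). -/
noncomputable def indDim (α : Type u) [t : TopologicalSpace α] : ℤ :=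
  sInf {d : ℤ | ∃ m : ℕ, d = (m : ℤ) - 1 ∧ IndDimLE m α t}

section Defs

variable {X : Type u} [TopologicalSpace X]

/-- `A` is an arc, i.e. homeomorphic to `[0,1]`. -/
def IsArcSet (A : Set X) : Prop :=
  Nonempty (↥A ≃ₜ ↥(Icc (0 : ℝ) 1))

/-- `A` is an arc with end points `a` and `b`. -/
def IsArcFromTo (A : Set X) (a b : X) : Prop :=
  ∃ h : ↥(Icc (0 : ℝ) 1) ≃ₜ ↥A,
    ((h ⟨0, by norm_num⟩ : ↥A) : X) = a ∧ ((h ⟨1, by norm_num⟩ : ↥A) : X) = b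

/-- `a` is an end point of the arc `A`. -/
def IsArcEndpoint (A : Set X) (a : X) : Prop := ∃ b, IsArcFromTo A a b

/-- The points of the arc `A` which are not end points of `A`. -/
def arcInterior (A : Set X) : Set X := {x ∈ A | ¬ IsArcEndpoint A x}

/-- `N` is a simple `n`-od with vertex `v`: the union of `n` arcs emanating from `v`
and otherwise disjoint from each other. -/
def IsSimpleNod (n : ℕ) (N : Set X) (v : X) : Prop :=
  0 < n ∧ ∃ A : Fin n → Set X, (∀ i, IsArcSet (A i)) ∧ (⋃ i, A i) = N ∧
    (∀ i, IsArcEndpoint (A i) v) ∧ ∀ i j, i ≠ j → A i ∩ A j = {v}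

/-- `x` has order `n` in the subspace `S`: `x` has a closed neighborhood in `S`
which is a simple `n`-od having `x` as the vertex. -/
def HasOrdIn (S : Set X) (x : X) (n : ℕ) : Prop :=
  ∃ N : Set X, N ⊆ S ∧ IsClosed N ∧ (∃ U : Set X, IsOpen U ∧ x ∈ U ∧ U ∩ S ⊆ N) ∧
    IsSimpleNod n N x

/-- The order of `x` in the subspace `S`. -/
noncomputable def ordIn (S : Set X) (x : X) : ℕ := sInf {n | HasOrdIn S x n}

/-- End points (order `1`) of the subspace `S`. -/
def endPtsIn (S : Set X) : Set X := {x ∈ S | HasOrdIn S x 1}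

/-- Ordinary points (order `2`) of the subspace `S`. -/
def ordinaryIn (S : Set X) : Set X := {x ∈ S | HasOrdIn S x 2}

/-- Ramification points (order `≥ 3`) of the subspace `S`. -/
def ramifIn (S : Set X) : Set X := {x ∈ S | ∃ n, 3 ≤ n ∧ HasOrdIn S x n}

/-- Vertices (points of order `≠ 2`) of the subspace `S`. -/
def verticesIn (S : Set X) : Set X := {x ∈ S | ¬ HasOrdIn S x 2}

/-- `e` is an edge of the subspace `S`: an arc joining two vertices of `S` and
containing no more than two vertices of `S`. -/
def IsEdgeIn (S : Set X) (e : Set X) : Prop :=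
  e ⊆ S ∧ ∃ a b, a ∈ verticesIn S ∧ b ∈ verticesIn S ∧ IsArcFromTo e a b ∧
    e ∩ verticesIn S ⊆ {a, b}

/-- `S` is a simple closed curve. -/
def IsSimpleClosedCurve (S : Set X) : Prop := Nonempty (↥S ≃ₜ Circle)

end Defs

/-- `X` is an arc (as a space). -/
def IsArcSpace (X : Type u) [TopologicalSpace X] : Prop :=
  Nonempty (X ≃ₜ ↥(Icc (0 : ℝ) 1))

/-- `X` is a finite graph: a continuum which is the union of finitely many arcs, any two
of which are either disjoint or intersect only in one or both of their end points. -/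
def IsFiniteGraph (X : Type u) [MetricSpace X] : Prop :=
  CompactSpace X ∧ ConnectedSpace X ∧ Nonempty X ∧
    ∃ 𝒜 : Finset (Set X), (∀ A ∈ 𝒜, IsArcSet A) ∧ ⋃₀ (𝒜 : Set (Set X)) = univ ∧
      ∀ A ∈ 𝒜, ∀ B ∈ 𝒜, A ≠ B → ∀ x ∈ A ∩ B, IsArcEndpoint A x ∧ IsArcEndpoint B x

/-- `X` is a tree: a finite graph without simple closed curves. -/
def IsTree (X : Type u) [MetricSpace X] : Prop :=
  IsFiniteGraph X ∧ ∀ S : Set X, ¬ IsSimpleClosedCurve S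

/-- `X` is neither an arc nor a simple `n`-od. -/
def NotArcNotNod (X : Type u) [MetricSpace X] : Prop :=
  ¬ IsArcSpace X ∧ ∀ (n : ℕ) (v : X), ¬ IsSimpleNod n (univ : Set X) v

/-- `T(X)`: the union of all edges of `X` disjoint from the set of end points of `X`. -/
def Tpart (X : Type u) [MetricSpace X] : Set X :=
  ⋃₀ {e : Set X | IsEdgeIn (univ : Set X) e ∧ e ∩ endPtsIn (univ : Set X) = ∅}

/-- `Sub_p(T(X))`: subtrees of `T(X)` containing `p` (subcontinua of `T(X)` all of whose
edges are edges of `X`). -/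
def SubTreesP (X : Type u) [MetricSpace X] (p : X) : Set (Set X) :=
  {Y | Y ⊆ Tpart X ∧ p ∈ Y ∧ IsCompact Y ∧ IsConnected Y ∧
    ∀ e : Set X, IsEdgeIn Y e → IsEdgeIn (univ : Set X) e}

/-- Subtrees of the tree `X`. -/
def Subtrees (X : Type u) [MetricSpace X] : Set (Set X) :=
  {Y | IsCompact Y ∧ IsConnected Y ∧
    ∀ e : Set X, IsEdgeIn Y e → IsEdgeIn (univ : Set X) e}

/-- The smallest subtree of `X` containing `a` and `b`. -/
def treeHull (X : Type u) [MetricSpace X] (a b : X) : Set X :=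
  ⋂₀ {Y | Y ∈ Subtrees X ∧ a ∈ Y ∧ b ∈ Y}

/-- The hyperspace `C(p,X)` of subcontinua of `X` containing `p`,
with the Hausdorff metric. -/
def CP (X : Type u) [MetricSpace X] (p : X) : Type u :=
  {A : NonemptyCompacts X // IsConnected (A : Set X) ∧ p ∈ (A : Set X)}

noncomputable instance (X : Type u) [MetricSpace X] (p : X) : MetricSpace (CP X p) :=
  inferInstanceAs (MetricSpace
    {A : NonemptyCompacts X // IsConnected (A : Set X) ∧ p ∈ (A : Set X)})

/-- The underlying subset of `X` of an element of `C(p,X)`. -/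
def CP.set {X : Type u} [MetricSpace X] {p : X} (A : CP X p) : Set X := (A.1 : Set X)

/-- `U_n(X)`: elements of `C(p,X)` having a neighborhood in `C(p,X)` homeomorphic to
the `n`-cell `[0,1]^n`. -/
def Un (X : Type u) [MetricSpace X] (p : X) (n : ℕ) : Set (CP X p) :=
  {A | ∃ N : Set (CP X p), N ∈ 𝓝 A ∧ Nonempty (↥N ≃ₜ (Fin n → ↥(Icc (0 : ℝ) 1)))}

/-- `𝒰(X) = ⋃ₙ U_n(X)`. -/
def UnionUn (X : Type u) [MetricSpace X] (p : X) : Set (CP X p) := ⋃ n : ℕ, Un X p n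

/-- The edges of `X` which are not edges of `Y` and intersect `Y`. -/
def incidentE (X : Type u) [MetricSpace X] (Y : Set X) : Set (Set X) :=
  {e | IsEdgeIn (univ : Set X) e ∧ ¬ IsEdgeIn Y e ∧ (e ∩ Y).Nonempty}

/-- `U_Y`: elements of `C(p,X)` of the form `Y` together with exactly one interior point
of each edge of `X` incident on `Y`. -/
def UofY (X : Type u) [MetricSpace X] (p : X) (Y : Set X) : Set (CP X p) :=
  {B | ∃ f : ↥(incidentE X Y) → X,
    (∀ e : ↥(incidentE X Y), f e ∈ arcInterior (e : Set X)) ∧ B.set = Y ∪ range f}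

/-- `(X,p)` has unique hyperspace `C(p,X)` in the class of trees. -/
def UniqueHyperspaceInTrees (X : Type u) [MetricSpace X] (p : X) : Prop :=
  ∀ (Y : Type u) [MetricSpace Y], IsTree Y → ∀ q : Y,
    Nonempty (CP X p ≃ₜ CP Y q) → ∃ 𝔥 : X ≃ₜ Y, 𝔥 p = q

section DiscreteCube

open Finset

variable {ι R : Type*} [CommRing R]

section DecidableEq

variable [DecidableEq ι]

/-- The cup product `df₁ ∪ ⋯ ∪ dfₙ` of the differentials of functions on a grid, summed over the
Kuhn simplices based at `x` whose edges are in pairwise different directions from `S`; only used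
in characteristic two, where these simplices need no orientation. -/
def cupDiff : List ((ι → ℕ) → R) → Finset ι → (ι → ℕ) → R
  | [], _, _ => 1
  | f :: fs, S, x =>
      ∑ a ∈ S, fwdDiff (Pi.single a 1) f x * cupDiff fs (S.erase a) (x + Pi.single a 1)

theorem sum_sum_erase_eq_zero [CharP R 2] (S : Finset ι) {F : ι → ι → R}
    (hF : ∀ a b, F a b = F b a) : ∑ a ∈ S, ∑ b ∈ S.erase a, F a b = 0 := by
  rw [sum_sigma']
  refine sum_involution (fun p _ => ⟨p.2, p.1⟩) (fun p _ => ?_) (fun p hp _ h => ?_)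
    (fun p hp => ?_) fun p _ => rfl
  · rw [hF p.2, CharTwo.add_self_eq_zero]
  · simp only [mem_sigma, mem_erase] at hp
    exact hp.2.1 (congrArg Sigma.fst h)
  · simp only [mem_sigma, mem_erase] at hp ⊢
    exact ⟨hp.2.2, hp.2.1.symm, hp.1⟩

theorem sum_fwdDiff_cupDiff_erase [CharP R 2] (fs : List ((ι → ℕ) → R)) (S : Finset ι)
    (x : ι → ℕ) : ∑ a ∈ S, fwdDiff (Pi.single a 1) (cupDiff fs (S.erase a)) x = 0 := by
  induction fs generalizing S x with
  | nil => simp [cupDiff, fwdDiff]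
  | cons f fs ih =>
    let W (a b : ι) : (ι → ℕ) → R := cupDiff fs ((S.erase a).erase b)
    have leibniz (a b : ι) :
        fwdDiff (Pi.single b 1) f (x + Pi.single a 1) * W a b (x + Pi.single a 1 + Pi.single b 1) -
            fwdDiff (Pi.single b 1) f x * W a b (x + Pi.single b 1) =
          fwdDiff (Pi.single a 1) (fwdDiff (Pi.single b 1) f) x *
              W a b (x + Pi.single a 1 + Pi.single b 1) +
            fwdDiff (Pi.single b 1) f x * fwdDiff (Pi.single a 1) (W a b) (x + Pi.single b 1) := by
      simp only [fwdDiff, add_right_comm x (Pi.single b 1)]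
      ring
    have second_differences : ∑ a ∈ S, ∑ b ∈ S.erase a,
        fwdDiff (Pi.single a 1) (fwdDiff (Pi.single b 1) f) x *
          W a b (x + Pi.single a 1 + Pi.single b 1) = 0 :=
      sum_sum_erase_eq_zero S fun a b => by
        simp only [W, fwdDiff, erase_right_comm (a := a), add_right_comm x (Pi.single b 1)]
        ring
    have first_differences : ∑ a ∈ S, ∑ b ∈ S.erase a,
        fwdDiff (Pi.single b 1) f x * fwdDiff (Pi.single a 1) (W a b) (x + Pi.single b 1) = 0 := by
      rw [sum_comm' (t' := S) (s' := S.erase) fun a b => by simp only [mem_erase]; tauto]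
      refine sum_eq_zero fun b _ => ?_
      simp only [W, erase_right_comm (b := b), ← mul_sum, ih, mul_zero]
    refine Eq.trans ?_ ((congrArg₂ (· + ·) second_differences first_differences).trans (add_zero 0))
    simp only [← sum_add_distrib, ← leibniz]
    refine sum_congr rfl fun a _ => ?_
    rw [fwdDiff, cupDiff, cupDiff, ← sum_sub_distrib]

theorem cupDiff_cons_eq_sum_fwdDiff [CharP R 2] (f : (ι → ℕ) → R) (fs : List ((ι → ℕ) → R))
    (S : Finset ι) (x : ι → ℕ) :
    cupDiff (f :: fs) S x =
      ∑ a ∈ S, fwdDiff (Pi.single a 1) (f * cupDiff fs (S.erase a)) x := by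
  have closed : ∑ a ∈ S, f x * fwdDiff (Pi.single a 1) (cupDiff fs (S.erase a)) x = 0 := by
    rw [← mul_sum, sum_fwdDiff_cupDiff_erase, mul_zero]
  rw [cupDiff, ← add_zero (∑ a ∈ S, _), ← closed, ← sum_add_distrib]
  refine sum_congr rfl fun a _ => ?_
  simp only [fwdDiff, Pi.mul_apply]
  ring

theorem exists_ne_of_cupDiff_ne_zero {fs : List ((ι → ℕ) → R)} {S : Finset ι} {x : ι → ℕ}
    (h : cupDiff fs S x ≠ 0) {f : (ι → ℕ) → R} (hf : f ∈ fs) :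
    ∃ y z, f y ≠ f z ∧ ∀ w ∈ ({y, z} : Set (ι → ℕ)),
      x ≤ w ∧ w ≤ x + 1 ∧ ∀ i ∉ S, w i = x i := by
  induction fs generalizing S x with
  | nil => simp at hf
  | cons g fs ih =>
    obtain ⟨a, ha, hne⟩ := exists_ne_zero_of_sum_ne_zero h
    have single_le : (Pi.single a 1 : ι → ℕ) ≤ 1 := fun i => by
      by_cases hi : i = a <;> simp [hi]
    rcases List.mem_cons.1 hf with rfl | hf
    · refine ⟨x + Pi.single a 1, x, sub_ne_zero.1 (left_ne_zero_of_mul hne), ?_⟩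
      rintro w (rfl | rfl)
      · refine ⟨le_self_add, by gcongr, fun i hi => ?_⟩
        simp [(ne_of_mem_of_not_mem ha hi).symm]
      · exact ⟨le_rfl, le_self_add, fun _ _ => rfl⟩
    · obtain ⟨y, z, hyz, hw⟩ := ih (right_ne_zero_of_mul hne) hf
      refine ⟨y, z, hyz, fun w hwyz => ?_⟩
      obtain ⟨hxw, hwx, hwS⟩ := hw w hwyz
      refine ⟨le_self_add.trans hxw, fun i => ?_, fun i hi => ?_⟩
      · by_cases hi : i = a
        · simpa [hi] using (hwS a (by simp)).le
        · simpa [Pi.single_apply, hi] using hwx i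
      · have hia : i ≠ a := (ne_of_mem_of_not_mem ha hi).symm
        simpa [Pi.single_apply, hia] using hwS i (by simp [hi])

section Fintype

variable [Fintype ι]

/-- The lower corners of the unit cells of the face through `z`, in the directions `S`, of a cube
of side length `k`. -/
def gridBox (k : ℕ) (S : Finset ι) (z : ι → ℕ) : Finset (ι → ℕ) :=
  Fintype.piFinset fun i => if i ∈ S then range k else {z i}

theorem mem_gridBox {k : ℕ} {S : Finset ι} {z x : ι → ℕ} :
    x ∈ gridBox k S z ↔ ∀ i, if i ∈ S then x i < k else x i = z i := by
  simp only [gridBox, Fintype.mem_piFinset]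
  refine forall_congr' fun i => ?_
  split_ifs <;> simp

theorem sum_gridBox_eq_sum_slices {k : ℕ} {S : Finset ι} {a : ι} (ha : a ∈ S) (z : ι → ℕ)
    (g : (ι → ℕ) → R) :
    ∑ x ∈ gridBox k S z, g x =
      ∑ t ∈ range k, ∑ x ∈ gridBox k (S.erase a) (Function.update z a t), g x := by
  rw [← sum_fiberwise_of_maps_to (g := fun x => x a) (t := range k) fun x hx => by
    simpa [ha] using mem_gridBox.1 hx a]
  refine sum_congr rfl fun t ht => sum_congr (Finset.ext fun x => ?_) fun _ _ => rfl
  simp only [mem_filter, mem_gridBox, Finset.mem_range] at ht ⊢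
  constructor
  · rintro ⟨hx, rfl⟩ i
    by_cases hi : i = a
    · simp [hi]
    · simpa [hi] using hx i
  · intro hx
    have hxa : x a = t := by simpa using hx a
    refine ⟨fun i => ?_, hxa⟩
    by_cases hi : i = a
    · simpa [hi, ha, hxa] using ht
    · simpa [hi] using hx i

theorem sum_gridBox_shift {k : ℕ} {S : Finset ι} {a : ι} (ha : a ∉ S) (z : ι → ℕ)
    (g : (ι → ℕ) → R) :
    ∑ x ∈ gridBox k S z, g (x + Pi.single a 1) = ∑ x ∈ gridBox k S (z + Pi.single a 1), g x := by
  refine sum_bij' (fun x _ => x + Pi.single a 1) (fun x _ => x - Pi.single a 1)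
    (fun x hx => mem_gridBox.2 fun i => ?_) (fun x hx => mem_gridBox.2 fun i => ?_)
    (fun x _ => funext fun i => Nat.add_sub_cancel _ _) (fun x hx => ?_) fun x _ => rfl
  · rcases eq_or_ne i a with rfl | hi
    · simpa [ha] using mem_gridBox.1 hx i
    · simpa [hi] using mem_gridBox.1 hx i
  · rcases eq_or_ne i a with rfl | hi
    · have : x i = z i + 1 := by simpa [ha] using mem_gridBox.1 hx i
      simp [ha, this]
    · simpa [hi] using mem_gridBox.1 hx i
  · refine tsub_add_cancel_of_le fun i => ?_
    rcases eq_or_ne i a with rfl | hi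
    · have : x i = z i + 1 := by simpa [ha] using mem_gridBox.1 hx i
      simp [this]
    · simp [hi]

theorem sum_gridBox_fwdDiff {k : ℕ} {S : Finset ι} {a : ι} (ha : a ∈ S) (z : ι → ℕ)
    (g : (ι → ℕ) → R) :
    ∑ x ∈ gridBox k S z, fwdDiff (Pi.single a 1) g x =
      ∑ x ∈ gridBox k (S.erase a) (Function.update z a k), g x -
        ∑ x ∈ gridBox k (S.erase a) (Function.update z a 0), g x := by
  have update_succ (t : ℕ) :
      Function.update z a t + Pi.single a 1 = Function.update z a (t + 1) := by
    funext i
    by_cases hi : i = a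
    · subst hi; simp
    · simp [hi]
  rw [sum_gridBox_eq_sum_slices ha,
    ← sum_range_sub fun t => ∑ x ∈ gridBox k (S.erase a) (Function.update z a t), g x]
  refine sum_congr rfl fun t _ => ?_
  simp only [fwdDiff, sum_sub_distrib, sum_gridBox_shift (notMem_erase a S), update_succ]

theorem sum_gridBox_cupDiff [CharP R 2] {k : ℕ} {f : ι → (ι → ℕ) → R}
    (h0 : ∀ i x, x i = 0 → f i x = 0) (hk : ∀ i x, x i = k → f i x = 1) {l : List ι}
    (hl : l.Nodup) (z : ι → ℕ) :
    ∑ x ∈ gridBox k l.toFinset z, cupDiff (l.map f) l.toFinset x = 1 := by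
  induction l generalizing z with
  | nil => simp [gridBox, cupDiff]
  | cons i l ih =>
    obtain ⟨hil, hl'⟩ := List.nodup_cons.1 hl
    set S := (i :: l).toFinset with hS
    have value_on_face {a : ι} {t : ℕ} {x : ι → ℕ}
        (hx : x ∈ gridBox k (S.erase a) (Function.update z a t)) : x a = t := by
      simpa using mem_gridBox.1 hx a
    have vanish_on_side {a : ι} (ha : a ∈ l) {t : ℕ} (ht : t = 0 ∨ t = k) {x : ι → ℕ}
        (hx : x ∈ gridBox k (S.erase a) (Function.update z a t)) :
        cupDiff (l.map f) (S.erase a) x = 0 := by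
      by_contra hne
      obtain ⟨y, w, hyw, hface⟩ := exists_ne_of_cupDiff_ne_zero hne (List.mem_map_of_mem ha)
      have hy : y a = t := ((hface y (by simp)).2.2 a (by simp)).trans (value_on_face hx)
      have hw : w a = t := ((hface w (by simp)).2.2 a (by simp)).trans (value_on_face hx)
      rcases ht with rfl | rfl
      · exact hyw ((h0 a y hy).trans (h0 a w hw).symm)
      · exact hyw ((hk a y hy).trans (hk a w hw).symm)
    have faces (a : ι) (ha : a ∈ S) :
        ∑ x ∈ gridBox k S z, fwdDiff (Pi.single a 1) (f i * cupDiff (l.map f) (S.erase a)) x =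
          if a = i then 1 else 0 := by
      rw [sum_gridBox_fwdDiff ha]
      split_ifs with hai
      · subst hai
        have herase : S.erase a = l.toFinset := by simp [hS, hil]
        rw [sum_eq_zero (s := gridBox k _ (Function.update z a 0)) fun x hx => by
          simp [h0 a x (value_on_face hx)], sub_zero, ← ih hl' (Function.update z a k), ← herase]
        exact sum_congr rfl fun x hx => by simp [hk a x (value_on_face hx)]
      · have hal : a ∈ l := by simpa [hS, hai] using ha
        rw [sum_eq_zero fun x hx => by simp [vanish_on_side hal (.inr rfl) hx],
          sum_eq_zero fun x hx => by simp [vanish_on_side hal (.inl rfl) hx], sub_zero]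
    rw [List.map_cons]
    simp only [cupDiff_cons_eq_sum_fwdDiff]
    rw [sum_comm, sum_congr rfl faces]
    simp [hS]

end Fintype

end DecidableEq

/-- The Steinhaus chessboard theorem. -/
theorem exists_cell_forall_bicolored [Finite ι] {k : ℕ} {P : ι → (ι → ℕ) → Prop}
    (h0 : ∀ i x, x i = 0 → ¬P i x) (hk : ∀ i x, x i = k → P i x) :
    ∃ x : ι → ℕ, (∀ i, x i < k) ∧
      ∀ i, (∃ y ∈ Set.Icc x (x + 1), P i y) ∧ ∃ z ∈ Set.Icc x (x + 1), ¬P i z := by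
  cases nonempty_fintype ι
  classical
  let f (i : ι) (x : ι → ℕ) : ZMod 2 := if P i x then 1 else 0
  have hsum := sum_gridBox_cupDiff (f := f) (fun i x hx => if_neg (h0 i x hx))
    (fun i x hx => if_pos (hk i x hx)) (nodup_toList univ) 0
  obtain ⟨x, hx, hne⟩ := exists_ne_zero_of_sum_ne_zero (hsum.trans_ne one_ne_zero)
  refine ⟨x, fun i => by simpa using mem_gridBox.1 hx i, fun i => ?_⟩
  obtain ⟨y, z, hyz, hw⟩ := exists_ne_of_cupDiff_ne_zero hne
    (List.mem_map_of_mem (mem_toList.2 (mem_univ i)))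
  have hy : y ∈ Set.Icc x (x + 1) := ⟨(hw y (by simp)).1, (hw y (by simp)).2.1⟩
  have hz : z ∈ Set.Icc x (x + 1) := ⟨(hw z (by simp)).1, (hw z (by simp)).2.1⟩
  by_cases hPy : P i y <;> by_cases hPz : P i z
  · simp [f, hPy, hPz] at hyz
  · exact ⟨⟨y, hy, hPy⟩, z, hz, hPz⟩
  · exact ⟨⟨z, hz, hPz⟩, y, hy, hPy⟩
  · simp [f, hPy, hPz] at hyz

end DiscreteCube

section InvarianceOfDimension

variable {ι κ : Type*}

section Fintype

variable [Fintype ι]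

theorem dist_natCast_div_le {k : ℕ} (hk : 0 < k) {x y : ι → ℕ} (hy : y ∈ Icc x (x + 1)) :
    dist (fun i => (y i : ℝ) / k) (fun i => (x i : ℝ) / k) ≤ 1 / k := by
  refine (dist_pi_le_iff (by positivity)).2 fun i => ?_
  have hxy : (0 : ℝ) ≤ y i - x i := sub_nonneg.2 (by exact_mod_cast hy.1 i)
  have hyx : (y i : ℝ) ≤ x i + 1 := by exact_mod_cast hy.2 i
  rw [Real.dist_eq, ← sub_div, abs_of_nonneg (by positivity)]
  gcongr
  linarith

theorem exists_norm_lt_of_faces {g : (ι → ℝ) → ι → ℝ} (hg : ContinuousOn g (Icc 0 1))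
    (h0 : ∀ x ∈ Icc (0 : ι → ℝ) 1, ∀ i, x i = 0 → g x i ≤ 0)
    (h1 : ∀ x ∈ Icc (0 : ι → ℝ) 1, ∀ i, x i = 1 → 0 ≤ g x i) {δ : ℝ} (hδ : 0 < δ) :
    ∃ x ∈ Icc (0 : ι → ℝ) 1, ‖g x‖ < δ := by
  obtain ⟨ε, hε, huc⟩ := Metric.uniformContinuousOn_iff.1
    (isCompact_Icc.uniformContinuousOn_of_continuous hg) δ hδ
  obtain ⟨n, hn⟩ := exists_nat_one_div_lt hε
  have hk : (0 : ℝ) < (n + 1 : ℕ) := by positivity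
  let c (x : ι → ℕ) : ι → ℝ := fun i => x i / (n + 1 : ℕ)
  obtain ⟨x, hxk, hcell⟩ := exists_cell_forall_bicolored (k := n + 1)
    (P := fun i x => x i ≠ 0 ∧ (x i = n + 1 ∨ 0 < g (c x) i))
    (fun i x hx => by simp [hx]) (fun i x hx => by simp [hx])
  have c_mem {y : ι → ℕ} (hy : y ∈ Icc x (x + 1)) : c y ∈ Icc (0 : ι → ℝ) 1 := by
    refine ⟨fun i => by positivity, fun i => (div_le_one hk).2 ?_⟩
    exact_mod_cast (hy.2 i).trans (hxk i)
  have x_mem : x ∈ Icc x (x + 1) := ⟨le_rfl, le_self_add⟩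
  have close {y : ι → ℕ} (hy : y ∈ Icc x (x + 1)) (i : ι) : |g (c y) i - g (c x) i| < δ :=
    (dist_pi_lt_iff hδ).1 (huc _ (c_mem hy) _ (c_mem x_mem)
      ((dist_natCast_div_le n.succ_pos hy).trans_lt (by exact_mod_cast hn))) i
  refine ⟨c x, c_mem x_mem, (pi_norm_lt_iff hδ).2 fun i => ?_⟩
  obtain ⟨⟨y, hy, -, hPy⟩, z, hz, hPz⟩ := hcell i
  have hgy : 0 ≤ g (c y) i := by
    rcases hPy with hyi | hyi
    · exact h1 _ (c_mem hy) i (by simp only [c, hyi, div_self hk.ne'])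
    · exact hyi.le
  have hgz : g (c z) i ≤ 0 := by
    by_cases hzi : z i = 0
    · exact h0 _ (c_mem hz) i (by simp [c, hzi])
    · exact not_lt.1 fun h => hPz ⟨hzi, .inr h⟩
  rw [Real.norm_eq_abs, abs_lt]
  constructor <;> linarith [abs_lt.1 (close hy i), abs_lt.1 (close hz i)]

end Fintype

/-- The Poincaré–Miranda theorem. -/
theorem exists_eq_zero_of_faces [Finite ι] {g : (ι → ℝ) → ι → ℝ} (hg : ContinuousOn g (Icc 0 1))
    (h0 : ∀ x ∈ Icc (0 : ι → ℝ) 1, ∀ i, x i = 0 → g x i ≤ 0)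
    (h1 : ∀ x ∈ Icc (0 : ι → ℝ) 1, ∀ i, x i = 1 → 0 ≤ g x i) :
    ∃ x ∈ Icc (0 : ι → ℝ) 1, g x = 0 := by
  cases nonempty_fintype ι
  obtain ⟨x, hx, hmin⟩ := isCompact_Icc.exists_isMinOn ⟨0, by simp⟩ hg.norm
  refine ⟨x, hx, norm_le_zero_iff.1 (le_of_forall_pos_lt_add fun δ hδ => ?_)⟩
  obtain ⟨y, hy, hyδ⟩ := exists_norm_lt_of_faces hg h0 h1 hδ
  simpa using (hmin hy).trans_lt hyδ

theorem exists_eventually_mem_ball_of_injOn {X Y : Type*} [MetricSpace X] [Nonempty X]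
    [TopologicalSpace Y] [T2Space Y] {K : Set X} (hK : IsCompact K) {f : X → Y}
    (hf : ContinuousOn f K) (hinj : InjOn f K) {r : ℝ} (hr : 0 < r) (y : Y) :
    ∃ x₀, ∀ᶠ y' in 𝓝 y, ∀ x ∈ K, f x = y' → dist x₀ x < r := by
  obtain ⟨x₀, hx₀⟩ : ∃ x₀, ∀ x ∈ K, f x = y → x₀ = x := by
    by_cases h : ∃ x₀ ∈ K, f x₀ = y
    · obtain ⟨x₀, hx₀, rfl⟩ := h
      exact ⟨x₀, fun x hx hxy => hinj hx₀ hx hxy.symm⟩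
    · exact ⟨Classical.arbitrary X, fun x hx hxy => (h ⟨x, hx, hxy⟩).elim⟩
  have hclosed : IsClosed (f '' (K ∩ (Metric.ball x₀ r)ᶜ)) :=
    ((hK.inter_right Metric.isOpen_ball.isClosed_compl).image_of_continuousOn
      (hf.mono inter_subset_left)).isClosed
  have hy : y ∉ f '' (K ∩ (Metric.ball x₀ r)ᶜ) := by
    rintro ⟨x, ⟨hx, hxr⟩, hxy⟩
    exact hxr (hx₀ x hx hxy ▸ Metric.mem_ball_self hr)
  refine ⟨x₀, Filter.mem_of_superset (hclosed.isOpen_compl.mem_nhds hy) ?_⟩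
  intro y' hy' x hx hxy
  by_contra hxr
  exact hy' ⟨x, ⟨hx, fun h => hxr (Metric.mem_ball'.1 h)⟩, hxy⟩

theorem exists_contDiff_dist_lt_of_injOn {E F : Type*} [NormedAddCommGroup E] [NormedSpace ℝ E]
    [NormedAddCommGroup F] [NormedSpace ℝ F] [FiniteDimensional ℝ F] {K : Set E}
    (hK : IsCompact K) {f : E → F} (hf : ContinuousOn f K) (hinj : InjOn f K) {r : ℝ}
    (hr : 0 < r) : ∃ G : F → E, ContDiff ℝ 1 G ∧ ∀ x ∈ K, dist (G (f x)) x < r := by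
  let t (y : F) : Set E := ⋂ x ∈ {x ∈ K | f x = y}, Metric.ball x r
  have ht : ∀ y, Convex ℝ (t y) := fun y => convex_iInter₂ fun x _ => convex_ball x r
  obtain ⟨G, hG⟩ := exists_contMDiffMap_forall_mem_convex_of_local (n := 1)
    (modelWithCornersSelf ℝ F) ht fun y => by
      obtain ⟨x₀, hx₀⟩ := exists_eventually_mem_ball_of_injOn hK hf hinj hr y
      refine ⟨_, hx₀, fun _ => x₀, contMDiffOn_const, fun y' hy' => mem_iInter₂.2 ?_⟩
      exact fun x hx => hy' x hx.1 hx.2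
  refine ⟨G, contMDiff_iff_contDiff.1 G.contMDiff, fun x hx => ?_⟩
  exact mem_iInter₂.1 (hG (f x)) x ⟨hx, rfl⟩

theorem not_injOn_cube_of_card_lt [Finite ι] [Finite κ] (h : Nat.card κ < Nat.card ι)
    {f : (ι → ℝ) → κ → ℝ} (hf : ContinuousOn f (Icc 0 1)) : ¬ InjOn f (Icc 0 1) := by
  cases nonempty_fintype ι
  cases nonempty_fintype κ
  intro hinj
  obtain ⟨G, hG, hGf⟩ := exists_contDiff_dist_lt_of_injOn isCompact_Icc hf hinj
    (by norm_num : (0 : ℝ) < 1 / 4)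
  -- A `C¹` map from a space of smaller dimension misses points arbitrarily close to the center.
  obtain ⟨c, hcG, hc⟩ : ∃ c ∈ (range G)ᶜ, dist (fun _ => 1 / 2 : ι → ℝ) c < 1 / 4 :=
    (hG.dense_compl_range_of_finrank_lt_finrank (by simpa using h)).exists_dist_lt _ (by norm_num)
  have coord_close {x : ι → ℝ} (hx : x ∈ Icc 0 1) (i : ι) :
      |G (f x) i - x i| < 1 / 4 ∧ |1 / 2 - c i| < 1 / 4 :=
    ⟨(dist_pi_lt_iff (by norm_num)).1 (hGf x hx) i, (dist_pi_lt_iff (by norm_num)).1 hc i⟩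
  obtain ⟨x, -, hx⟩ := exists_eq_zero_of_faces (g := fun x => G (f x) - c)
    ((hG.continuous.comp_continuousOn hf).sub continuousOn_const)
    (fun x hx i hi => by
      obtain ⟨hxi, hci⟩ := (coord_close hx i).imp abs_lt.1 abs_lt.1
      simp only [Pi.sub_apply]
      linarith)
    (fun x hx i hi => by
      obtain ⟨hxi, hci⟩ := (coord_close hx i).imp abs_lt.1 abs_lt.1
      simp only [Pi.sub_apply]
      linarith)
  exact hcG ⟨f x, sub_eq_zero.1 hx⟩

end InvarianceOfDimension

section Branching

variable {I : Type*} {b : I → I → ℝ}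

/-- A rooted metric tree, presented as a union of branches indexed by `I`: the branches `i` and `j`
separate at height `b i j`, and `b i i` is the length of the branch `i`. -/
structure IsBranching (b : I → I → ℝ) : Prop where
  nonneg : ∀ i j, 0 ≤ b i j
  symm : ∀ i j, b i j = b j i
  min_le : ∀ i j k, min (b i k) (b k j) ≤ b i j

/-- A branching in which no branch is contained in another one, so that the branches correspond to
the leaves of the tree. -/
structure IsReducedBranching (b : I → I → ℝ) : Prop extends IsBranching b where
  pos : ∀ i, 0 < b i i
  lt_diag : ∀ i j, i ≠ j → b i j < b i i

theorem IsBranching.le_diag (hb : IsBranching b) (i j : I) : b i j ≤ b i i := by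
  simpa only [hb.symm j i, min_self] using hb.min_le i i j

/-- A subtree containing the root, encoded by the height `y i` up to which it contains the
branch `i`. -/
structure IsSubtree (b : I → I → ℝ) (y : I → ℝ) : Prop where
  nonneg : ∀ i, 0 ≤ y i
  le_diag : ∀ i, y i ≤ b i i
  min_le : ∀ i j, min (y i) (b i j) ≤ y j

theorem IsSubtree.inf {y z : I → ℝ} (hy : IsSubtree b y) (hz : IsSubtree b z) :
    IsSubtree b (y ⊓ z) where
  nonneg i := le_inf (hy.nonneg i) (hz.nonneg i)
  le_diag i := inf_le_left.trans (hy.le_diag i)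
  min_le i j := le_inf ((min_le_min_right _ inf_le_left).trans (hy.min_le i j))
    ((min_le_min_right _ inf_le_right).trans (hz.min_le i j))

theorem IsSubtree.sup {y z : I → ℝ} (hy : IsSubtree b y) (hz : IsSubtree b z) :
    IsSubtree b (y ⊔ z) where
  nonneg i := le_sup_of_le_left (hy.nonneg i)
  le_diag i := sup_le (hy.le_diag i) (hz.le_diag i)
  min_le i j := by
    rw [Pi.sup_apply, min_max_distrib_right]
    exact max_le_max (hy.min_le i j) (hz.min_le i j)

/-- The model of the hyperspace of subtrees containing the root, with the topology and the order
of `I → ℝ`. -/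
def subtreeSpace (b : I → I → ℝ) : Sublattice (I → ℝ) where
  carrier := {y | IsSubtree b y}
  supClosed' _ hy _ hz := hy.sup hz
  infClosed' _ hy _ hz := hy.inf hz

/-- The point at height `t` of the branch `i`, encoded by the segment from the root to it. -/
def branchPoint (b : I → I → ℝ) (i : I) (t : ℝ) : I → ℝ := fun j => min t (b i j)

/-- The rooted tree with branching heights `b`. -/
def branchTree (b : I → I → ℝ) : Set (I → ℝ) :=
  {x | ∃ i, ∃ t ∈ Icc 0 (b i i), x = branchPoint b i t}

theorem IsBranching.isSubtree_branchPoint (hb : IsBranching b) (i : I) {t : ℝ} (ht : 0 ≤ t) :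
    IsSubtree b (branchPoint b i t) where
  nonneg j := le_min ht (hb.nonneg i j)
  le_diag j := (min_le_right _ _).trans ((hb.symm i j).trans_le (hb.le_diag j i))
  min_le j k := le_min ((min_le_left _ _).trans (min_le_left _ _))
    ((min_le_min_right _ (min_le_right _ _)).trans (hb.min_le i k j))

theorem IsBranching.isSubtree_of_mem_branchTree (hb : IsBranching b) {x : I → ℝ}
    (hx : x ∈ branchTree b) : IsSubtree b x := by
  obtain ⟨i, t, ht, rfl⟩ := hx
  exact hb.isSubtree_branchPoint i ht.1

theorem branchPoint_mono (b : I → I → ℝ) (i : I) : Monotone (branchPoint b i) :=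
  fun _ _ h _ => min_le_min_right _ h

theorem continuous_branchPoint (b : I → I → ℝ) (i : I) : Continuous (branchPoint b i) :=
  continuous_pi fun _ => continuous_id.min continuous_const

theorem branchPoint_apply_self {i : I} {t : ℝ} (ht : t ≤ b i i) : branchPoint b i t i = t :=
  min_eq_left ht

theorem IsSubtree.branchPoint_le_iff {y : I → ℝ} (hy : IsSubtree b y) {i : I} {t : ℝ}
    (ht : t ≤ b i i) : branchPoint b i t ≤ y ↔ t ≤ y i :=
  ⟨fun h => (le_min le_rfl ht).trans (h i), fun h j => (min_le_min_right _ h).trans (hy.min_le i j)⟩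

namespace IsBranching

theorem branchPoint_zero (hb : IsBranching b) (i : I) : branchPoint b i 0 = 0 :=
  funext fun j => min_eq_left (hb.nonneg i j)

theorem branchPoint_congr (hb : IsBranching b) {i k : I} {t : ℝ} (ht : t ≤ b i k) :
    branchPoint b i t = branchPoint b k t := by
  funext j
  refine le_antisymm (le_min (min_le_left _ _) ?_) (le_min (min_le_left _ _) ?_)
  · exact (min_le_min_right _ (hb.symm i k ▸ ht)).trans (hb.min_le k j i)
  · exact (min_le_min_right _ ht).trans (hb.min_le i j k)

theorem apply_eq_of_lt (hb : IsBranching b) {y : I → ℝ} (hy : IsSubtree b y) {i j : I}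
    (h : y i < b i j) : y i = y j := by
  have hij : y i ≤ y j := by simpa only [min_eq_left h.le] using hy.min_le i j
  have hji := hy.min_le j i
  rw [hb.symm j i] at hji
  exact hij.antisymm ((min_le_iff.1 hji).resolve_right h.not_ge)

theorem apply_lt_symm (hb : IsBranching b) {y : I → ℝ} (hy : IsSubtree b y) {i j : I}
    (h : y i < b i j) : y j < b j i := by
  rwa [hb.symm j i, ← hb.apply_eq_of_lt hy h]

/-- The partition of the branches according to whether they have already separated inside the
subtree `y`. It labels the stratum of `y` in the space of subtrees. -/
def stratum (hb : IsBranching b) (y : subtreeSpace b) : Setoid I where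
  r i j := i = j ∨ y.1 i < b i j
  iseqv := by
    refine ⟨fun i => .inl rfl, ?_, ?_⟩
    · rintro i j (rfl | h)
      · exact .inl rfl
      · exact .inr (hb.apply_lt_symm y.2 h)
    · rintro i j k (rfl | hij) (rfl | hjk)
      · exact .inl rfl
      · exact .inr hjk
      · exact .inr hij
      · refine .inr ((lt_min hij ?_).trans_le (hb.min_le i k j))
        rwa [hb.apply_eq_of_lt y.2 hij]

theorem apply_eq_of_stratum (hb : IsBranching b) (y : subtreeSpace b) {i j : I}
    (h : hb.stratum y i j) : y.1 i = y.1 j := by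
  rcases h with rfl | h
  · rfl
  · exact hb.apply_eq_of_lt y.2 h

theorem stratum_antitone (hb : IsBranching b) : Antitone hb.stratum := by
  rintro y z hyz i j (rfl | h)
  · exact .inl rfl
  · exact .inr ((hyz i).trans_lt h)

theorem stratum_inf (hb : IsBranching b) (y z : subtreeSpace b) :
    hb.stratum (y ⊓ z) = hb.stratum y ⊔ hb.stratum z := by
  refine le_antisymm ?_
    (sup_le (hb.stratum_antitone inf_le_left) (hb.stratum_antitone inf_le_right))
  rintro i j (rfl | hij)
  · exact (hb.stratum y ⊔ hb.stratum z).refl i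
  · rcases min_lt_iff.1 hij with hy | hz
    · exact (le_sup_left : hb.stratum y ≤ _) (.inr hy)
    · exact (le_sup_right : hb.stratum z ≤ _) (.inr hz)

theorem stratum_sup (hb : IsBranching b) (y z : subtreeSpace b) :
    hb.stratum (y ⊔ z) = hb.stratum y ⊓ hb.stratum z := by
  refine le_antisymm
    (le_inf (hb.stratum_antitone le_sup_left) (hb.stratum_antitone le_sup_right)) ?_
  rintro i j ⟨hy | hy, hz | hz⟩
  · exact .inl hy
  · exact .inl hy
  · exact .inl hz
  · exact .inr (max_lt hy hz)

theorem eventually_stratum_le [Finite I] (hb : IsBranching b) (y : subtreeSpace b) :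
    ∀ᶠ z in 𝓝 y, hb.stratum y ≤ hb.stratum z := by
  have stable (i j : I) : ∀ᶠ z : subtreeSpace b in 𝓝 y, y.1 i < b i j → z.1 i < b i j :=
    Filter.eventually_imp_distrib_left.2 fun hij =>
      ((continuous_apply i).comp continuous_subtype_val).continuousAt.eventually_lt
        continuousAt_const hij
  filter_upwards [Filter.eventually_all.2 fun i => Filter.eventually_all.2 (stable i)] with z hz
  exact fun i j => Or.imp_right (hz i j)

theorem exists_continuous_injOn_nhds [Finite I] (hb : IsBranching b) (y : subtreeSpace b) :
    ∃ f : subtreeSpace b → Quotient (hb.stratum y) → ℝ, Continuous f ∧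
      ∃ N ∈ 𝓝 y, InjOn f N := by
  refine ⟨fun z q => z.1 q.out,
    continuous_pi fun q => (continuous_apply q.out).comp continuous_subtype_val, _,
    hb.eventually_stratum_le y, fun z hz w hw h => Subtype.ext (funext fun i => ?_)⟩
  have hi : hb.stratum y (⟦i⟧ : Quotient (hb.stratum y)).out i := Quotient.mk_out i
  rw [← hb.apply_eq_of_stratum z (hz hi), ← hb.apply_eq_of_stratum w (hw hi)]
  exact congrFun h ⟦i⟧

end IsBranching

/-- The subtree `y` with every branch prolonged by `v i`, except that the complete branches are
shortened. -/
noncomputable def perturb (b : I → I → ℝ) (y v : I → ℝ) (i : I) : ℝ :=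
  if y i < b i i then y i + v i else y i - v i

theorem continuous_perturb (b : I → I → ℝ) (y : I → ℝ) : Continuous (perturb b y) := by
  refine continuous_pi fun i => ?_
  unfold perturb
  split_ifs <;> fun_prop

theorem perturb_injective (b : I → I → ℝ) (y : I → ℝ) : Function.Injective (perturb b y) := by
  intro v w h
  funext i
  have hi := congrFun h i
  unfold perturb at hi
  split_ifs at hi <;> linarith

theorem dist_perturb_apply (b : I → I → ℝ) (y v : I → ℝ) (i : I) :
    dist (perturb b y v i) (y i) = |v i| := by
  unfold perturb
  split_ifs <;> simp

/-- `ε` is at most each of the positive lengths that limit the perturbations of `y`. -/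
structure IsMargin (b : I → I → ℝ) (y : I → ℝ) (ε : ℝ) : Prop where
  le_length : ∀ i, ε ≤ b i i
  le_tail : ∀ i j, i ≠ j → ε ≤ b i i - b i j
  le_rest : ∀ i, y i < b i i → ε ≤ b i i - y i

namespace IsReducedBranching

theorem eventually_isMargin [Finite I] (hb : IsReducedBranching b) (y : I → ℝ) :
    ∀ᶠ ε in 𝓝[>] (0 : ℝ), IsMargin b y ε := by
  have small {c : ℝ} (hc : 0 < c) : ∀ᶠ ε in 𝓝[>] (0 : ℝ), ε ≤ c :=
    nhdsWithin_le_nhds (Iic_mem_nhds hc)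
  have length : ∀ᶠ ε in 𝓝[>] (0 : ℝ), ∀ i, ε ≤ b i i :=
    Filter.eventually_all.2 fun i => small (hb.pos i)
  have tail : ∀ᶠ ε in 𝓝[>] (0 : ℝ), ∀ i j, i ≠ j → ε ≤ b i i - b i j :=
    Filter.eventually_all.2 fun i => Filter.eventually_all.2 fun j =>
      Filter.eventually_imp_distrib_left.2 fun hij => small (sub_pos.2 (hb.lt_diag i j hij))
  have rest : ∀ᶠ ε in 𝓝[>] (0 : ℝ), ∀ i, y i < b i i → ε ≤ b i i - y i :=
    Filter.eventually_all.2 fun i =>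
      Filter.eventually_imp_distrib_left.2 fun hi => small (sub_pos.2 hi)
  filter_upwards [length, tail, rest] with ε hlength htail hrest
  exact ⟨hlength, htail, hrest⟩

theorem isSubtree_perturb (hb : IsReducedBranching b) (y : subtreeSpace b) {ε : ℝ}
    (hε : IsMargin b y ε) {v : I → ℝ} (hv : ∀ i, v i ∈ Icc 0 ε)
    (hconst : ∀ i j, hb.stratum y i j → v i = v j) : IsSubtree b (perturb b y v) where
  nonneg i := by
    have hvi := hv i
    unfold perturb
    split_ifs with hi
    · linarith [y.2.nonneg i, hvi.1]
    · linarith [hε.le_length i, hvi.2]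
  le_diag i := by
    have hvi := hv i
    unfold perturb
    split_ifs with hi
    · linarith [hε.le_rest i hi, hvi.2]
    · linarith [y.2.le_diag i, hvi.1]
  min_le i j := by
    by_cases hij : i = j
    · exact hij ▸ min_le_left _ _
    by_cases hsep : y.1 i < b i j
    · have hi : y.1 i < b i i := hsep.trans_le (hb.le_diag i j)
      have hj : y.1 j < b j j := (hb.apply_lt_symm y.2 hsep).trans_le (hb.le_diag j i)
      refine (min_le_left _ _).trans_eq ?_
      rw [perturb, perturb, if_pos hi, if_pos hj, hb.apply_eq_of_lt y.2 hsep,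
        hconst i j (.inr hsep)]
    · refine (min_le_right _ _).trans ?_
      have hbj : b i j ≤ y.1 j := by simpa only [min_eq_right (not_lt.1 hsep)] using y.2.min_le i j
      have hvj := hv j
      unfold perturb
      split_ifs with hj
      · linarith [hvj.1]
      · have := hε.le_tail j i (Ne.symm hij)
        rw [hb.symm j i] at this
        linarith [hvj.2]

theorem exists_cube_nhds [Finite I] (hb : IsReducedBranching b) (y : subtreeSpace b)
    {N : Set (subtreeSpace b)} (hN : N ∈ 𝓝 y) :
    ∃ f : (Quotient (hb.stratum y) → ℝ) → subtreeSpace b, Continuous f ∧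
      (∀ t, f t ∈ N) ∧ InjOn f (Icc 0 1) := by
  cases nonempty_fintype I
  obtain ⟨η, hη, hball⟩ := Metric.mem_nhds_iff.1 hN
  obtain ⟨ε, ⟨hε, hεη⟩, hε0 : 0 < ε⟩ := (((hb.eventually_isMargin y.1).and
    (nhdsWithin_le_nhds (Iio_mem_nhds hη))).and self_mem_nhdsWithin).exists
  let u (t : Quotient (hb.stratum y) → ℝ) (i : I) : ℝ := projIcc 0 1 zero_le_one (t ⟦i⟧)
  let v (t : Quotient (hb.stratum y) → ℝ) (i : I) : ℝ := ε * u t i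
  have v_mem (t) (i) : v t i ∈ Icc 0 ε :=
    have hu : u t i ∈ Icc 0 1 := Subtype.coe_prop _
    ⟨mul_nonneg hε0.le hu.1, mul_le_of_le_one_right hε0.le hu.2⟩
  have v_continuous : Continuous v := by fun_prop
  have v_injOn : InjOn v (Icc 0 1) := by
    intro t ht s hs hts
    funext q
    induction q using Quotient.inductionOn with | _ i
    simpa only [u, projIcc_of_mem zero_le_one ⟨ht.1 ⟦i⟧, ht.2 ⟦i⟧⟩,
      projIcc_of_mem zero_le_one ⟨hs.1 ⟦i⟧, hs.2 ⟦i⟧⟩]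
      using mul_left_cancel₀ hε0.ne' (congrFun hts i)
  have hsub (t) : IsSubtree b (perturb b y.1 (v t)) :=
    hb.isSubtree_perturb y hε (v_mem t) fun i j hij => by
      simp only [v, u, Quotient.sound hij]
  refine ⟨fun t => ⟨_, hsub t⟩,
    ((continuous_perturb b y.1).comp v_continuous).subtype_mk _, fun t => hball ?_,
    fun t ht s hs hts => v_injOn ht hs (perturb_injective b y.1 (congrArg Subtype.val hts))⟩
  refine ((dist_pi_le_iff hε0.le).2 fun i => ?_).trans_lt hεη
  rw [dist_perturb_apply, abs_of_nonneg (v_mem t i).1]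
  exact (v_mem t i).2

end IsReducedBranching

section Homeomorph

variable {I' : Type*} [Finite I] [Finite I'] {b' : I' → I' → ℝ}

theorem card_stratum_le_of_homeomorph (hb : IsReducedBranching b) (hb' : IsBranching b')
    (H : subtreeSpace b ≃ₜ subtreeSpace b') (y : subtreeSpace b) :
    Nat.card (Quotient (hb.stratum y)) ≤ Nat.card (Quotient (hb'.stratum (H y))) := by
  obtain ⟨f, hf, N, hN, hfinj⟩ := hb'.exists_continuous_injOn_nhds (H y)
  obtain ⟨g, hg, hgN, hginj⟩ := hb.exists_cube_nhds y (H.continuous.continuousAt hN)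
  by_contra! hlt
  refine not_injOn_cube_of_card_lt hlt (hf.comp (H.continuous.comp hg)).continuousOn ?_
  exact fun s hs t ht hst => hginj hs ht (H.injective (hfinj (hgN s) (hgN t) hst))

theorem card_stratum_homeomorph (hb : IsReducedBranching b) (hb' : IsReducedBranching b')
    (H : subtreeSpace b ≃ₜ subtreeSpace b') (y : subtreeSpace b) :
    Nat.card (Quotient (hb'.stratum (H y))) = Nat.card (Quotient (hb.stratum y)) := by
  refine le_antisymm ?_ (card_stratum_le_of_homeomorph hb hb'.toIsBranching H y)
  simpa using card_stratum_le_of_homeomorph hb' hb.toIsBranching H.symm (H y)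

end Homeomorph

end Branching

section Strata

theorem setoid_eq_of_le_of_card_quotient_le {α : Type*} [Finite α] {r s : Setoid α} (h : r ≤ s)
    (hcard : Nat.card (Quotient r) ≤ Nat.card (Quotient s)) : r = s := by
  let f : Quotient r → Quotient s := Quotient.map' id h
  have hf : Function.Surjective f := fun q => q.inductionOn fun a => ⟨⟦a⟧, rfl⟩
  have hinj : Function.Injective f := ((Nat.bijective_iff_surjective_and_card f).2
    ⟨hf, hcard.antisymm (Nat.card_le_card_of_surjective f hf)⟩).1
  exact h.antisymm fun i j hij =>
    Quotient.exact (hinj (a₁ := ⟦i⟧) (a₂ := ⟦j⟧) (Quotient.sound hij))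

theorem exists_orderIso_range {α β P Q : Type*} [PartialOrder P] [PartialOrder Q] {f : α → P}
    {g : β → Q} (H : α ≃ β) (h : ∀ x y, g (H x) ≤ g (H y) ↔ f x ≤ f y) :
    ∃ F : range f ≃o range g, ∀ x, F ⟨f x, x, rfl⟩ = ⟨g (H x), H x, rfl⟩ := by
  choose s hs using fun S : range f => S.2
  let F : range f ↪o range g := OrderEmbedding.ofMapLEIff
    (fun S => ⟨g (H (s S)), mem_range_self _⟩) fun S T =>
      (h _ _).trans (by rw [hs, hs, Subtype.coe_le_coe])
  have hF (x : α) : F ⟨f x, x, rfl⟩ = ⟨g (H x), H x, rfl⟩ :=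
    Subtype.ext (le_antisymm ((h _ _).2 (hs ⟨f x, x, rfl⟩).le) ((h _ _).2 (hs ⟨f x, x, rfl⟩).ge))
  refine ⟨RelIso.ofSurjective F ?_, hF⟩
  rintro ⟨_, y, rfl⟩
  exact ⟨⟨f (H.symm y), _, rfl⟩, (hF _).trans (Subtype.ext (by rw [H.apply_symm_apply]))⟩

variable {I I' : Type*} {b : I → I → ℝ} {b' : I' → I' → ℝ}

theorem IsSubtree.inf_const {y : I → ℝ} (hy : IsSubtree b y) {t : ℝ} (ht : 0 ≤ t) :
    IsSubtree b (y ⊓ fun _ => t) where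
  nonneg i := le_inf (hy.nonneg i) ht
  le_diag i := inf_le_left.trans (hy.le_diag i)
  min_le i j := le_inf ((min_le_min_right _ inf_le_left).trans (hy.min_le i j))
    ((min_le_left _ _).trans inf_le_right)

variable [Finite I] [Finite I']

theorem exists_monotone_path {y z : subtreeSpace b} (hyz : y ≤ z) :
    ∃ w : ℝ → subtreeSpace b, Continuous w ∧ Monotone w ∧ w 0 = y ∧ ∃ T ≥ 0, w T = z := by
  have hsub (t : ℝ) : y.1 ⊔ (z.1 ⊓ fun _ => max t 0) ∈ subtreeSpace b :=
    y.2.sup (z.2.inf_const (le_max_right t 0))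
  obtain ⟨T, hT⟩ := (finite_range z.1).bddAbove
  refine ⟨fun t => ⟨_, hsub t⟩, Continuous.subtype_mk (continuous_pi fun i => ?_) _,
    fun s t hst => sup_le_sup_left
      (inf_le_inf_left z.1 fun _ => max_le_max_right 0 hst : z.1 ⊓ _ ≤ z.1 ⊓ _) y.1,
    Subtype.ext (sup_eq_left.2 fun i => ?_), max T 0, le_max_right _ _,
    Subtype.ext (funext fun i => ?_)⟩
  · simp only [Pi.sup_apply, Pi.inf_apply]
    fun_prop
  · exact inf_le_right.trans ((max_self (0 : ℝ)).trans_le (y.2.nonneg i))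
  · have hi : z.1 i ≤ max (max T 0) 0 := le_max_of_le_left (le_max_of_le_left (hT ⟨i, rfl⟩))
    exact (congrArg (max (y.1 i)) (min_eq_left hi)).trans (max_eq_right (hyz i))

theorem stratum_homeomorph_eq_of_eq_of_le (hb : IsReducedBranching b) (hb' : IsReducedBranching b')
    (H : subtreeSpace b ≃ₜ subtreeSpace b') {y z : subtreeSpace b}
    (h : hb.stratum y = hb.stratum z) (hle : hb'.stratum (H y) ≤ hb'.stratum (H z)) :
    hb'.stratum (H y) = hb'.stratum (H z) := by
  refine setoid_eq_of_le_of_card_quotient_le hle ?_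
  rw [card_stratum_homeomorph hb hb' H, card_stratum_homeomorph hb hb' H, h]

theorem stratum_homeomorph_le_of_le (hb : IsReducedBranching b) (hb' : IsReducedBranching b')
    (H : subtreeSpace b ≃ₜ subtreeSpace b') {y z : subtreeSpace b} (hyz : y ≤ z) :
    hb'.stratum (H z) ≤ hb'.stratum (H y) := by
  obtain ⟨w, hw, hmono, rfl, T, hT, rfl⟩ := exists_monotone_path hyz
  let S : Set ℝ := {t | hb'.stratum (H (w t)) ≤ hb'.stratum (H (w 0))}
  have nearby (t : ℝ) : ∀ᶠ s in 𝓝 t, hb'.stratum (H (w t)) ≤ hb'.stratum (H (w s)) :=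
    (H.continuous.comp hw).continuousAt.eventually (hb'.eventually_stratum_le (H (w t)))
  have hclosed : IsClosed S := by
    rw [← isOpen_compl_iff, isOpen_iff_mem_nhds]
    intro t ht
    filter_upwards [nearby t] with s hts hs
    exact ht (hts.trans hs)
  refine (hclosed.inter isClosed_Icc).Icc_subset_of_forall_mem_nhdsWithin
    (le_refl (hb'.stratum _)) ?_ (right_mem_Icc.2 hT)
  rintro t ⟨ht, -⟩
  filter_upwards [nhdsWithin_le_nhds (nearby t),
    nhdsWithin_le_nhds (hw.continuousAt.eventually (hb.eventually_stratum_le (w t))),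
    self_mem_nhdsWithin] with s hHs hs hts
  have hst : hb.stratum (w t) = hb.stratum (w s) :=
    hs.antisymm (hb.stratum_antitone (hmono (mem_Ioi.1 hts).le))
  exact (stratum_homeomorph_eq_of_eq_of_le hb hb' H hst hHs).ge.trans ht

theorem stratum_homeomorph_le (hb : IsReducedBranching b) (hb' : IsReducedBranching b')
    (H : subtreeSpace b ≃ₜ subtreeSpace b') {y z : subtreeSpace b}
    (h : hb.stratum z ≤ hb.stratum y) : hb'.stratum (H z) ≤ hb'.stratum (H y) := by
  have hinf : hb.stratum (y ⊓ z) = hb.stratum y := (hb.stratum_inf y z).trans (sup_eq_left.2 h)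
  rw [stratum_homeomorph_eq_of_eq_of_le hb hb' H hinf.symm
    (stratum_homeomorph_le_of_le hb hb' H inf_le_left)]
  exact stratum_homeomorph_le_of_le hb hb' H inf_le_right

theorem stratum_homeomorph_le_iff (hb : IsReducedBranching b) (hb' : IsReducedBranching b')
    (H : subtreeSpace b ≃ₜ subtreeSpace b') {y z : subtreeSpace b} :
    hb'.stratum (H z) ≤ hb'.stratum (H y) ↔ hb.stratum z ≤ hb.stratum y :=
  ⟨fun h => by simpa using stratum_homeomorph_le hb' hb H.symm h, stratum_homeomorph_le hb hb' H⟩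

theorem exists_orderIso_range_stratum (hb : IsReducedBranching b) (hb' : IsReducedBranching b')
    (H : subtreeSpace b ≃ₜ subtreeSpace b') :
    ∃ F : range hb.stratum ≃o range hb'.stratum,
      ∀ S, Nat.card (Quotient (F S).1) = Nat.card (Quotient S.1) := by
  obtain ⟨F, hF⟩ := exists_orderIso_range (f := hb.stratum) (g := hb'.stratum) H.toEquiv
    fun _ _ => stratum_homeomorph_le_iff hb hb' H
  refine ⟨F, ?_⟩
  rintro ⟨_, y, rfl⟩
  rw [hF]
  exact card_stratum_homeomorph hb hb' H y

end Strata

section Counting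

variable {α α' : Type*}

/-- The class `q` of a setoid has at least two elements. -/
def IsNontrivialClass {S : Setoid α} (q : Quotient S) : Prop :=
  ∃ i j, ⟦i⟧ = q ∧ ⟦j⟧ = q ∧ i ≠ j

/-- The class `q` of a setoid is not contained in a class of `U`. -/
def SeparatesClass {S : Setoid α} (U : Setoid α) (q : Quotient S) : Prop :=
  ∃ i j, ⟦i⟧ = q ∧ ⟦j⟧ = q ∧ ¬U i j

/-- Among the members of the family `P` below `S`, the setoid `T` is the largest one separating the
class `q`, and it separates no other class. -/
structure IsSplitting {P : Set (Setoid α)} {S : P} (q : Quotient S.1) (T : P) : Prop where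
  le : T ≤ S
  separates : SeparatesClass T.1 q
  le_of_separates : ∀ U ≤ S, SeparatesClass U.1 q → U ≤ T
  rel_of_ne : ∀ i j, S.1 i j → ⟦i⟧ ≠ q → T.1 i j

namespace IsSplitting

variable {P : Set (Setoid α)} {S T : P} {q q' : Quotient S.1}

theorem covBy (hT : IsSplitting q T) : T ⋖ S := by
  refine ⟨hT.le.lt_of_ne ?_, fun U hTU hUS => ?_⟩
  · rintro rfl
    obtain ⟨i, j, hi, hj, hij⟩ := hT.separates
    exact hij (Quotient.exact (hi.trans hj.symm))
  · refine hUS.not_ge fun i j hij => ?_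
    by_contra hU
    by_cases hi : ⟦i⟧ = q
    · exact hTU.not_ge (hT.le_of_separates U hUS.le
        ⟨i, j, hi, (Quotient.sound (S.1.symm hij)).trans hi, hU⟩)
    · exact hU (hTU.le (hT.rel_of_ne i j hij hi))

theorem class_unique (hT : IsSplitting q T) (hT' : IsSplitting q' T) : q = q' := by
  by_contra hne
  obtain ⟨i, j, hi, hj, hij⟩ := hT.separates
  exact hij (hT'.rel_of_ne i j (Quotient.exact (hi.trans hj.symm)) (hi.trans_ne hne))

end IsSplitting

theorem card_covBy_eq {P : Set (Setoid α)} {S : P}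
    (hsplit : ∀ q : Quotient S.1, IsNontrivialClass q → ∃ T : P, IsSplitting q T) :
    Nat.card {T : P // T ⋖ S} = Nat.card {q : Quotient S.1 // IsNontrivialClass q} := by
  choose T hT using fun q : {q : Quotient S.1 // IsNontrivialClass q} => hsplit q.1 q.2
  refine (Nat.card_eq_of_bijective (fun q => ⟨T q, (hT q).covBy⟩) ⟨fun q q' h => ?_, ?_⟩).symm
  · have hTT : T q = T q' := congrArg Subtype.val h
    exact Subtype.ext ((hT q).class_unique (hTT ▸ hT q'))
  · rintro ⟨U, hU⟩
    obtain ⟨i, j, hij, hUij⟩ : ∃ i j, S.1 i j ∧ ¬U.1 i j := by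
      by_contra! h
      exact hU.lt.not_ge fun i j => h i j
    have hj : (⟦j⟧ : Quotient S.1) = ⟦i⟧ := Quotient.sound (S.1.symm hij)
    let q : {q : Quotient S.1 // IsNontrivialClass q} :=
      ⟨⟦i⟧, i, j, rfl, hj, fun h => hUij (h ▸ U.1.refl i)⟩
    have hle : U ≤ T q := (hT q).le_of_separates U hU.le ⟨i, j, rfl, hj, hUij⟩
    exact ⟨q, Subtype.ext ((hU.eq_or_eq hle (hT q).le).resolve_right (hT q).covBy.ne)⟩

theorem card_singletonClass_add_card_nontrivialClass [Finite α] (S : Setoid α) :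
    Nat.card {i // ∀ j, S i j → i = j} + Nat.card {q : Quotient S // IsNontrivialClass q} =
      Nat.card (Quotient S) := by
  have hsingle : Nat.card {i // ∀ j, S i j → i = j} =
      Nat.card {q : Quotient S // ¬IsNontrivialClass q} := by
    refine Nat.card_eq_of_bijective (fun i => ⟨⟦i.1⟧, ?_⟩) ⟨fun i j h => ?_, ?_⟩
    · rintro ⟨k, l, hk, hl, hkl⟩
      exact hkl ((i.2 k (S.symm (Quotient.exact hk))).symm.trans
        (i.2 l (S.symm (Quotient.exact hl))))
    · exact Subtype.ext (i.2 j.1 (Quotient.exact (congrArg Subtype.val h)))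
    · rintro ⟨q, hq⟩
      induction q using Quotient.inductionOn with | _ i
      refine ⟨⟨i, fun j hij => ?_⟩, rfl⟩
      by_contra hne
      exact hq ⟨i, j, rfl, Quotient.sound (S.symm hij), hne⟩
  classical
  rw [hsingle, add_comm, ← Nat.card_sum]
  exact Nat.card_congr (Equiv.sumCompl _)

section Fibers

variable [Finite α] [Finite α'] {P : Type*}

theorem card_subtype_le_eq_sum_card_fiber [Preorder P] (ρ : α → P) (a : P) [Fintype (Ici a)] :
    Nat.card {i // a ≤ ρ i} = ∑ c : Ici a, Nat.card {i // ρ i = c} := by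
  rw [← Nat.card_sigma]
  exact Nat.card_congr
    { toFun i := ⟨⟨ρ i, i.2⟩, i, rfl⟩
      invFun x := ⟨x.2.1, x.2.2.symm ▸ x.1.2⟩
      right_inv := by
        rintro ⟨⟨c, hc⟩, i, hi⟩
        change ρ i = c at hi
        subst hi
        rfl }

theorem card_fiber_eq_of_card_subtype_le_eq [PartialOrder P] [Finite P] {ρ : α → P} {ρ' : α' → P}
    (h : ∀ a, Nat.card {i // a ≤ ρ i} = Nat.card {i // a ≤ ρ' i}) (a : P) :
    Nat.card {i // ρ i = a} = Nat.card {i // ρ' i = a} := by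
  classical
  cases nonempty_fintype P
  induction a using WellFoundedGT.induction with | _ a ih
  let bot : Ici a := ⟨a, le_rfl⟩
  have ha := h a
  rw [card_subtype_le_eq_sum_card_fiber, card_subtype_le_eq_sum_card_fiber,
    Fintype.sum_eq_add_sum_subtype_ne _ bot, Fintype.sum_eq_add_sum_subtype_ne _ bot,
    Finset.sum_congr rfl fun c _ => ih c.1 (lt_of_le_of_ne c.1.2 fun h => c.2 (Subtype.ext h.symm))]
    at ha
  exact Nat.add_right_cancel ha

theorem exists_equiv_of_card_fiber_eq {ρ : α → P} {ρ' : α' → P}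
    (h : ∀ a, Nat.card {i // ρ i = a} = Nat.card {i // ρ' i = a}) :
    ∃ g : α ≃ α', ∀ i, ρ' (g i) = ρ i := by
  have e (a : P) : {i // ρ i = a} ≃ {i // ρ' i = a} := (Finite.card_eq.1 (h a)).some
  exact ⟨(Equiv.sigmaFiberEquiv ρ).symm.trans ((Equiv.sigmaCongrRight e).trans
    (Equiv.sigmaFiberEquiv ρ')), fun i => (e (ρ i) ⟨i, rfl⟩).2⟩

end Fibers

end Counting

section Poset

variable {I I' : Type*} {b : I → I → ℝ} {b' : I' → I' → ℝ}

namespace IsBranching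

/-- The segment from the root to the point where the branches `i` and `j` separate. -/
def fork (hb : IsBranching b) (i j : I) : subtreeSpace b :=
  ⟨branchPoint b i (b i j), hb.isSubtree_branchPoint i (hb.nonneg i j)⟩

theorem fork_le_iff (hb : IsBranching b) {i j : I} {y : subtreeSpace b} :
    hb.fork i j ≤ y ↔ b i j ≤ y.1 i :=
  y.2.branchPoint_le_iff (hb.le_diag i j)

theorem fork_le_iff_not_stratum (hb : IsBranching b) {i j : I} (hij : i ≠ j) {y : subtreeSpace b} :
    hb.fork i j ≤ y ↔ ¬hb.stratum y i j := by
  rw [hb.fork_le_iff, ← not_lt]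
  exact not_congr ⟨.inr, fun h => h.resolve_left hij⟩

theorem fork_comm (hb : IsBranching b) (i j : I) : hb.fork i j = hb.fork j i := by
  refine Subtype.ext ((hb.branchPoint_congr le_rfl).trans ?_)
  rw [hb.symm i j]
  rfl

theorem exists_lowest_separation [Finite I] (hb : IsBranching b) {S : Setoid I} {q : Quotient S}
    (hq : IsNontrivialClass q) :
    ∃ i j, ⟦i⟧ = q ∧ ⟦j⟧ = q ∧ i ≠ j ∧ ∀ k l, ⟦k⟧ = q → ⟦l⟧ = q → b i j ≤ b k l := by
  obtain ⟨i₀, j₀, hpair₀⟩ := hq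
  obtain ⟨⟨i, j⟩, ⟨hi, hj, hne⟩, hmin⟩ :=
    exists_min_image {p : I × I | (⟦p.1⟧ : Quotient S) = q ∧ ⟦p.2⟧ = q ∧ p.1 ≠ p.2}
      (fun p => b p.1 p.2) (toFinite _) ⟨(i₀, j₀), hpair₀⟩
  refine ⟨i, j, hi, hj, hne, fun k l hk hl => ?_⟩
  rcases ne_or_eq k l with hkl | rfl
  · exact hmin (k, l) ⟨hk, hl, hkl⟩
  · rcases ne_or_eq k i with hki | rfl
    · exact (hmin (k, i) ⟨hk, hi, hki⟩).trans (hb.le_diag k i)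
    · exact hb.le_diag k j

/-- The splitting is realized by adding to a subtree of the stratum `S` the segment up to the
lowest point where two branches of the class `q` separate. -/
theorem exists_isSplitting [Finite I] (hb : IsBranching b) {S : range hb.stratum} {q : Quotient S.1}
    (hq : IsNontrivialClass q) : ∃ T : range hb.stratum, IsSplitting q T := by
  obtain ⟨S, y, rfl⟩ := S
  obtain ⟨i, j, hi, hj, hij, hmin⟩ := hb.exists_lowest_separation hq
  refine ⟨⟨_, y ⊔ hb.fork i j, rfl⟩, hb.stratum_antitone le_sup_left,
    ⟨i, j, hi, hj, (hb.fork_le_iff_not_stratum hij).1 le_sup_right⟩, ?_, fun k l hkl hk => ?_⟩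
  · rintro ⟨_, z, rfl⟩ hzy ⟨k, l, hk, hl, hz⟩
    have hkl : b k l ≤ z.1 k := not_lt.1 fun h => hz (.inr h)
    have hfork : hb.fork i j ≤ z := hb.fork_le_iff.2 <|
      (le_min ((hmin k l hk hl).trans hkl) (hmin k i hk hi)).trans (z.2.min_le k i)
    exact (le_inf hzy (hb.stratum_antitone hfork)).trans_eq (hb.stratum_sup y _).symm
  · have hik : b i k ≤ y.1 i := not_lt.1 fun h =>
      hk ((Quotient.sound (s := hb.stratum y) (.inr h)).symm.trans hi)
    have hyk : b i k ≤ y.1 k := (le_min hik le_rfl).trans (y.2.min_le i k)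
    have hfork : hb.stratum (hb.fork i j) k l :=
      hkl.imp_right fun h => (min_le_right _ _).trans_lt (hyk.trans_lt h)
    exact (hb.stratum_sup y _).ge ⟨hkl, hfork⟩

end IsBranching

/-- The height where the branch `i` leaves the union of the other branches. If there is no other
branch, this is the junk value `0` of the empty supremum, which is the height of the root. -/
noncomputable def separationHeight (b : I → I → ℝ) (i : I) : ℝ := ⨆ j : {j // j ≠ i}, b i j

theorem le_separationHeight [Finite I] {i j : I} (h : j ≠ i) : b i j ≤ separationHeight b i :=
  le_ciSup (f := fun j : {j // j ≠ i} => b i j) (finite_range _).bddAbove ⟨j, h⟩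

namespace IsBranching

theorem separationHeight_nonneg (hb : IsBranching b) (i : I) : 0 ≤ separationHeight b i :=
  Real.iSup_nonneg fun _ => hb.nonneg _ _

theorem separationHeight_le (hb : IsBranching b) (i : I) : separationHeight b i ≤ b i i :=
  Real.iSup_le (fun _ => hb.le_diag _ _) (hb.nonneg i i)

/-- The segment from the root to the point where the branch `i` leaves the other branches. -/
noncomputable def stem (hb : IsBranching b) (i : I) : subtreeSpace b :=
  ⟨_, hb.isSubtree_branchPoint i (hb.separationHeight_nonneg i)⟩

theorem stem_inf_stem [Finite I] (hb : IsBranching b) {i j : I} (hij : i ≠ j) :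
    hb.stem i ⊓ hb.stem j = hb.fork i j := by
  have fork_le {i j : I} (h : i ≠ j) : hb.fork i j ≤ hb.stem i :=
    branchPoint_mono b i (le_separationHeight h.symm)
  refine le_antisymm (fun k => le_min ?_ ?_)
    (le_inf (fork_le hij) (hb.fork_comm i j ▸ fork_le hij.symm))
  · refine le_trans ?_ (hb.min_le i j k)
    rw [hb.symm k j]
    exact min_le_min (min_le_right _ _) (min_le_right _ _)
  · exact (min_le_left _ _).trans (min_le_right _ _)

/-- The stratum of the stem of the branch `i`. -/
noncomputable def leafStratum (hb : IsBranching b) (i : I) : range hb.stratum :=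
  ⟨_, hb.stem i, rfl⟩

theorem le_leafStratum_iff [Finite I] (hb : IsBranching b) (S : range hb.stratum) (i : I) :
    S ≤ hb.leafStratum i ↔ ∀ j, S.1 i j → i = j := by
  obtain ⟨S, y, rfl⟩ := S
  refine ⟨fun h j hij => (h hij).elim id fun hlt => ?_, fun h => ?_⟩
  · by_contra hne
    exact hlt.not_ge (le_min (le_separationHeight (Ne.symm hne)) (hb.le_diag i j))
  · have hsep : separationHeight b i ≤ y.1 i := Real.iSup_le
      (fun j => not_lt.1 fun hlt => j.2 (h j (.inr hlt)).symm) (y.2.nonneg i)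
    exact hb.stratum_antitone ((y.2.branchPoint_le_iff (hb.separationHeight_le i)).2 hsep)

/-- The stratum of the segment from the root to the point where `i` and `j` separate. -/
def forkStratum (hb : IsBranching b) (i j : I) : range hb.stratum :=
  ⟨_, hb.fork i j, rfl⟩

theorem isLUB_forkStratum [Finite I] (hb : IsBranching b) {i j : I} (hij : i ≠ j) :
    IsLUB {hb.leafStratum i, hb.leafStratum j} (hb.forkStratum i j) := by
  have hsup : (hb.forkStratum i j).1 = (hb.leafStratum i).1 ⊔ (hb.leafStratum j).1 :=
    (congrArg hb.stratum (hb.stem_inf_stem hij)).symm.trans (hb.stratum_inf _ _)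
  have hlub : IsLUB {(hb.leafStratum i).1, (hb.leafStratum j).1} (hb.forkStratum i j).1 :=
    hsup ▸ isLUB_pair
  exact .of_image (f := Subtype.val) Iff.rfl (by rwa [image_pair])

theorem not_forkStratum (hb : IsBranching b) {i j : I} (hij : i ≠ j) :
    ¬(hb.forkStratum i j).1 i j :=
  (hb.fork_le_iff_not_stratum hij).1 le_rfl

theorem forkStratum_le_iff (hb : IsBranching b) {i j k : I} (hik : i ≠ k) :
    hb.forkStratum i j ≤ hb.forkStratum i k ↔ b i k ≤ b i j := by
  refine ⟨fun h => ?_, fun h => hb.stratum_antitone (branchPoint_mono b i h)⟩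
  have hle : hb.fork i k ≤ hb.fork i j :=
    (hb.fork_le_iff_not_stratum hik).2 fun hr => hb.not_forkStratum hik (h hr)
  exact (hb.fork_le_iff.1 hle).trans (min_le_left _ _)

theorem isTop_forkStratum_iff (hb : IsBranching b) {i j : I} (hij : i ≠ j) :
    IsTop (hb.forkStratum i j) ↔ b i j = 0 := by
  have hzero : IsSubtree b 0 := hb.branchPoint_zero i ▸ hb.isSubtree_branchPoint i le_rfl
  refine ⟨fun h => ?_, ?_⟩
  · have hle : hb.fork i j ≤ ⟨0, hzero⟩ := (hb.fork_le_iff_not_stratum hij).2 fun hr =>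
      hb.not_forkStratum hij (h ⟨_, ⟨0, hzero⟩, rfl⟩ hr)
    exact (hb.fork_le_iff.1 hle).antisymm (hb.nonneg i j)
  · rintro h ⟨_, y, rfl⟩
    exact hb.stratum_antitone (hb.fork_le_iff.2 (h.trans_le (y.2.nonneg i)))

variable [Finite I] [Finite I'] {hb : IsBranching b} {hb' : IsBranching b'}

theorem card_singletonClass_eq (F : range hb.stratum ≃o range hb'.stratum)
    (hF : ∀ S, Nat.card (Quotient (F S).1) = Nat.card (Quotient S.1)) (S : range hb.stratum) :
    Nat.card {i // ∀ j, S.1 i j → i = j} = Nat.card {i // ∀ j, (F S).1 i j → i = j} := by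
  have hcovBy : Nat.card {T // T ⋖ S} = Nat.card {T // T ⋖ F S} :=
    Nat.card_congr (F.toEquiv.subtypeEquiv fun T => (apply_covBy_apply_iff F).symm)
  have hS := card_singletonClass_add_card_nontrivialClass S.1
  have hFS := card_singletonClass_add_card_nontrivialClass (F S).1
  rw [← card_covBy_eq fun q hq => hb.exists_isSplitting hq] at hS
  rw [← card_covBy_eq fun q hq => hb'.exists_isSplitting hq, hF] at hFS
  omega

theorem exists_equiv_leafStratum (F : range hb.stratum ≃o range hb'.stratum)
    (hF : ∀ S, Nat.card (Quotient (F S).1) = Nat.card (Quotient S.1)) :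
    ∃ g : I ≃ I', ∀ i, F (hb.leafStratum i) = hb'.leafStratum (g i) := by
  have : Finite (Setoid I) := Finite.of_injective (fun S : Setoid I => S.r) fun S T h =>
    Setoid.ext fun i j => iff_of_eq (congrFun (congrFun h i) j)
  have hcard (S : range hb.stratum) : Nat.card {i // S ≤ hb.leafStratum i} =
      Nat.card {i // S ≤ F.symm (hb'.leafStratum i)} := by
    simpa only [F.le_symm_apply, le_leafStratum_iff] using card_singletonClass_eq F hF S
  obtain ⟨g, hg⟩ := exists_equiv_of_card_fiber_eq (card_fiber_eq_of_card_subtype_le_eq hcard)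
  exact ⟨g, fun i => by rw [← hg, F.apply_symm_apply]⟩

variable {g : I ≃ I'}

theorem map_forkStratum {F : range hb.stratum ≃o range hb'.stratum}
    (hg : ∀ i, F (hb.leafStratum i) = hb'.leafStratum (g i)) {i j : I} (hij : i ≠ j) :
    F (hb.forkStratum i j) = hb'.forkStratum (g i) (g j) := by
  have h := F.isLUB_image'.2 (hb.isLUB_forkStratum hij)
  rw [image_pair, hg, hg] at h
  exact h.unique (hb'.isLUB_forkStratum (g.injective.ne hij))

end IsBranching

variable [Finite I] [Finite I']

theorem exists_equiv_of_homeomorph_subtreeSpace (hb : IsReducedBranching b)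
    (hb' : IsReducedBranching b') (H : subtreeSpace b ≃ₜ subtreeSpace b') :
    ∃ g : I ≃ I', (∀ i j k, b i j ≤ b i k ↔ b' (g i) (g j) ≤ b' (g i) (g k)) ∧
      ∀ i j, b i j = 0 ↔ b' (g i) (g j) = 0 := by
  obtain ⟨F, hF⟩ := exists_orderIso_range_stratum hb hb' H
  obtain ⟨g, hg⟩ := IsBranching.exists_equiv_leafStratum F hF
  have hfork {i j : I} (hij : i ≠ j) := IsBranching.map_forkStratum hg hij
  refine ⟨g, fun i j k => ?_, fun i j => ?_⟩
  · rcases eq_or_ne i k with rfl | hik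
    · exact iff_of_true (hb.le_diag i j) (hb'.le_diag _ _)
    rcases eq_or_ne i j with rfl | hij
    · exact iff_of_false (hb.lt_diag i k hik).not_ge (hb'.lt_diag _ _ (g.injective.ne hik)).not_ge
    rw [← hb.forkStratum_le_iff hij, ← hb'.forkStratum_le_iff (g.injective.ne hij), ← hfork hij,
      ← hfork hik, F.le_iff_le]
  · rcases eq_or_ne i j with rfl | hij
    · exact iff_of_false (hb.pos i).ne' (hb'.pos _).ne'
    rw [← hb.isTop_forkStratum_iff hij, ← hb'.isTop_forkStratum_iff (g.injective.ne hij),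
      ← hfork hij]
    simp only [IsTop, F.surjective.forall, F.le_iff_le]

end Poset

section Staircase

/-- The largest element of `insert 0 H` below `s`. -/
noncomputable def predOrZero (H : Finset ℝ) (s : ℝ) : ℝ :=
  (insert 0 (H.filter (· < s))).max' (Finset.insert_nonempty _ _)

theorem predOrZero_eq_zero_or_mem (H : Finset ℝ) (s : ℝ) :
    predOrZero H s = 0 ∨ predOrZero H s ∈ H ∧ predOrZero H s < s := by
  simpa only [predOrZero, Finset.mem_insert, Finset.mem_filter] using
    Finset.max'_mem _ (Finset.insert_nonempty 0 (H.filter (· < s)))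

theorem predOrZero_lt (H : Finset ℝ) {s : ℝ} (hs : 0 < s) : predOrZero H s < s :=
  (predOrZero_eq_zero_or_mem H s).elim (fun h => h.trans_lt hs) And.right

theorem le_predOrZero {H : Finset ℝ} {s a : ℝ} (ha : a ∈ insert 0 H) (h : a < s) :
    a ≤ predOrZero H s := by
  refine Finset.le_max' _ _ ?_
  rcases Finset.mem_insert.1 ha with rfl | ha
  · exact Finset.mem_insert_self _ _
  · exact Finset.mem_insert_of_mem (Finset.mem_filter.2 ⟨ha, h⟩)

/-- The affine map from `[p, s]` to `[0, 1]`, extended by constants. -/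
noncomputable def ramp (p s t : ℝ) : ℝ := max 0 (min 1 ((t - p) / (s - p)))

section Ramp

variable {p s t : ℝ}

theorem ramp_mono (h : p < s) : Monotone (ramp p s) := fun t t' ht => by
  have : 0 < s - p := sub_pos.2 h
  unfold ramp
  gcongr

theorem ramp_of_le (h : p < s) (ht : t ≤ p) : ramp p s t = 0 :=
  max_eq_left ((min_le_right _ _).trans
    (div_nonpos_of_nonpos_of_nonneg (sub_nonpos.2 ht) (sub_pos.2 h).le))

theorem ramp_of_ge (h : p < s) (ht : s ≤ t) : ramp p s t = 1 := by
  have hone : 1 ≤ (t - p) / (s - p) := (one_le_div (sub_pos.2 h)).2 (by linarith)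
  rw [ramp, min_eq_left hone, max_eq_right zero_le_one]

theorem ramp_lt {t' : ℝ} (h : p < s) (hpt : p ≤ t) (hts : t < s) (htt' : t < t') :
    ramp p s t < ramp p s t' := by
  have hd := sub_pos.2 h
  have hone : (t - p) / (s - p) < 1 := (div_lt_one hd).2 (by linarith)
  have hnonneg : 0 ≤ (t - p) / (s - p) := div_nonneg (by linarith) hd.le
  rw [ramp, ramp, min_eq_right hone.le, max_eq_right hnonneg]
  exact lt_max_of_lt_right (lt_min hone (by gcongr))

end Ramp

/-- The piecewise affine function increasing by one between consecutive elements of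
`insert 0 H`. -/
noncomputable def staircase (H : Finset ℝ) (t : ℝ) : ℝ :=
  ∑ s ∈ H, ramp (predOrZero H s) s t

theorem continuous_staircase (H : Finset ℝ) : Continuous (staircase H) := by
  unfold staircase ramp
  fun_prop

variable {H H' : Finset ℝ} {a t : ℝ}

theorem monotone_staircase (hH : ∀ s ∈ H, 0 < s) : Monotone (staircase H) :=
  fun _ _ h => Finset.sum_le_sum fun s hs => ramp_mono (predOrZero_lt H (hH s hs)) h

theorem strictMonoOn_staircase (hH : ∀ s ∈ H, 0 < s) (ha : a ∈ insert 0 H) :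
    StrictMonoOn (staircase H) (Icc 0 a) := by
  intro t ht t' ht' htt'
  have haH : a ∈ H := Finset.mem_of_mem_insert_of_ne ha ((ht.1.trans_lt htt').trans_le ht'.2).ne'
  obtain ⟨s, hs, hmin⟩ := (H.filter (t < ·)).exists_min_image id
    ⟨a, Finset.mem_filter.2 ⟨haH, htt'.trans_le ht'.2⟩⟩
  obtain ⟨hsH, hts⟩ := Finset.mem_filter.1 hs
  have hpred : predOrZero H s ≤ t := by
    rcases predOrZero_eq_zero_or_mem H s with hzero | ⟨hmem, hlt⟩
    · exact hzero.trans_le ht.1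
    · by_contra! h
      exact (hmin _ (Finset.mem_filter.2 ⟨hmem, h⟩)).not_gt hlt
  exact Finset.sum_lt_sum (fun s hs => ramp_mono (predOrZero_lt H (hH s hs)) htt'.le)
    ⟨s, hsH, ramp_lt (predOrZero_lt H (hH s hsH)) hpred hts htt'⟩

theorem staircase_eq_card (hH : ∀ s ∈ H, 0 < s) (ha : a ∈ insert 0 H) :
    staircase H a = (H.filter (· ≤ a)).card := by
  rw [Finset.card_filter, Nat.cast_sum]
  refine Finset.sum_congr rfl fun s hs => ?_
  split_ifs with h
  · rw [ramp_of_ge (predOrZero_lt H (hH s hs)) h, Nat.cast_one]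
  · rw [ramp_of_le (predOrZero_lt H (hH s hs)) (le_predOrZero ha (not_le.1 h)), Nat.cast_zero]

theorem staircase_zero (hH : ∀ s ∈ H, 0 < s) : staircase H 0 = 0 := by
  rw [staircase_eq_card hH (Finset.mem_insert_self 0 H),
    Finset.filter_false_of_mem fun s hs => (hH s hs).not_ge, Finset.card_empty, Nat.cast_zero]

theorem predOrZero_filter_le {s : ℝ} (hs : s ≤ a) :
    predOrZero (H.filter (· ≤ a)) s = predOrZero H s := by
  have hfilter : (H.filter (· ≤ a)).filter (· < s) = H.filter (· < s) := by
    rw [Finset.filter_filter]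
    exact Finset.filter_congr fun x _ => and_iff_right_of_imp fun hx => hx.le.trans hs
  simp only [predOrZero, hfilter]

theorem staircase_filter_le (hH : ∀ s ∈ H, 0 < s) (ha : a ∈ insert 0 H) (ht : t ≤ a) :
    staircase (H.filter (· ≤ a)) t = staircase H t := by
  rw [staircase, Finset.sum_filter, staircase]
  refine Finset.sum_congr rfl fun s hs => ?_
  split_ifs with h
  · rw [predOrZero_filter_le h]
  · exact (ramp_of_le (predOrZero_lt H (hH s hs))
      (ht.trans (le_predOrZero ha (not_le.1 h)))).symm

end Staircase

section Normalize

variable {I : Type*} [Finite I] {b : I → I → ℝ}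

/-- The positive heights occurring on the branch `i`. -/
noncomputable def heights (b : I → I → ℝ) (i : I) : Finset ℝ :=
  (finite_range (b i)).toFinset.filter (0 < ·)

theorem mem_heights {i : I} {s : ℝ} : s ∈ heights b i ↔ (∃ k, b i k = s) ∧ 0 < s := by
  simp only [heights, Finset.mem_filter, Finite.mem_toFinset, mem_range]

theorem heights_pos (b : I → I → ℝ) (i : I) : ∀ s ∈ heights b i, 0 < s :=
  fun _ hs => (mem_heights.1 hs).2

/-- The number of positive heights of the branch `i` up to `b i j`. -/
noncomputable def normHeight (b : I → I → ℝ) (i j : I) : ℝ :=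
  ((heights b i).filter (· ≤ b i j)).card

/-- The map rescaling each branch so that its branching heights become consecutive integers. -/
noncomputable def rescale (b : I → I → ℝ) (y : I → ℝ) (i : I) : ℝ :=
  staircase (heights b i) (y i)

theorem continuous_rescale (b : I → I → ℝ) : Continuous (rescale b) :=
  continuous_pi fun i => (continuous_staircase _).comp (continuous_apply i)

theorem rescale_zero (b : I → I → ℝ) : rescale b 0 = 0 :=
  funext fun i => staircase_zero (heights_pos b i)

namespace IsBranching

theorem mem_insert_heights (hb : IsBranching b) (i j : I) : b i j ∈ insert 0 (heights b i) := by
  rcases (hb.nonneg i j).eq_or_lt with h | h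
  · exact h ▸ Finset.mem_insert_self _ _
  · exact Finset.mem_insert_of_mem (mem_heights.2 ⟨⟨j, rfl⟩, h⟩)

theorem staircase_heights (hb : IsBranching b) (i j : I) :
    staircase (heights b i) (b i j) = normHeight b i j :=
  staircase_eq_card (heights_pos b i) (hb.mem_insert_heights i j)

theorem mem_heights_of_le (hb : IsBranching b) {i j : I} {s : ℝ} (hs : s ∈ heights b i)
    (hsj : s ≤ b i j) : s ∈ heights b j := by
  obtain ⟨⟨k, rfl⟩, hpos⟩ := mem_heights.1 hs
  refine mem_heights.2 ⟨?_, hpos⟩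
  rcases hsj.eq_or_lt with h | h
  · exact ⟨i, by rw [hb.symm j i, h]⟩
  · refine ⟨k, le_antisymm ?_ ((le_min ?_ le_rfl).trans (hb.min_le j k i))⟩
    · exact (min_le_iff.1 (hb.min_le i k j)).resolve_left h.not_ge
    · exact hb.symm j i ▸ h.le

theorem heights_filter_eq (hb : IsBranching b) (i j : I) :
    (heights b i).filter (· ≤ b i j) = (heights b j).filter (· ≤ b i j) := by
  ext s
  rw [Finset.mem_filter, Finset.mem_filter]
  exact and_congr_left fun h =>
    ⟨fun hs => hb.mem_heights_of_le hs h, fun hs => hb.mem_heights_of_le hs (hb.symm i j ▸ h)⟩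

theorem rescale_branchPoint (hb : IsBranching b) (i : I) (t : ℝ) :
    rescale b (branchPoint b i t) = branchPoint (normHeight b) i (staircase (heights b i) t) := by
  funext j
  have hji : b i j ∈ insert 0 (heights b j) := hb.symm j i ▸ hb.mem_insert_heights j i
  calc staircase (heights b j) (min t (b i j))
    _ = staircase ((heights b j).filter (· ≤ b i j)) (min t (b i j)) :=
      (staircase_filter_le (heights_pos b j) hji (min_le_right _ _)).symm
    _ = staircase (heights b i) (min t (b i j)) := by
      rw [← hb.heights_filter_eq, staircase_filter_le (heights_pos b i)
        (hb.mem_insert_heights i j) (min_le_right _ _)]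
    _ = min (staircase (heights b i) t) (normHeight b i j) := by
      rw [(monotone_staircase (heights_pos b i)).map_min, hb.staircase_heights]

theorem image_rescale_branchTree (hb : IsBranching b) :
    rescale b '' branchTree b = branchTree (normHeight b) := by
  have hmono (i : I) := monotone_staircase (heights_pos b i)
  have hzero (i : I) := staircase_zero (heights_pos b i)
  ext z
  constructor
  · rintro ⟨_, ⟨i, t, ht, rfl⟩, rfl⟩
    refine ⟨i, staircase (heights b i) t, ⟨?_, ?_⟩, hb.rescale_branchPoint i t⟩
    · exact hzero i ▸ hmono i ht.1
    · exact hb.staircase_heights i i ▸ hmono i ht.2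
  · rintro ⟨i, u, hu, rfl⟩
    have hivt := intermediate_value_Icc (hb.nonneg i i)
      (continuous_staircase (heights b i)).continuousOn
    rw [hzero, hb.staircase_heights] at hivt
    obtain ⟨t, ht, rfl⟩ := hivt hu
    exact ⟨_, ⟨i, t, ht, rfl⟩, hb.rescale_branchPoint i t⟩

theorem injOn_rescale_branchTree (hb : IsBranching b) : InjOn (rescale b) (branchTree b) := by
  intro x hx y hy hxy
  have hmem {x : I → ℝ} (hx : x ∈ branchTree b) (i : I) : x i ∈ Icc 0 (b i i) :=
    have hx := hb.isSubtree_of_mem_branchTree hx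
    ⟨hx.nonneg i, hx.le_diag i⟩
  exact funext fun i =>
    (strictMonoOn_staircase (heights_pos b i) (hb.mem_insert_heights i i)).injOn (hmem hx i)
      (hmem hy i) (congrFun hxy i)

end IsBranching

theorem card_image_le_card_image_of_factorsThrough {α β γ : Type*} [DecidableEq β] [DecidableEq γ]
    (s : Finset α) {f : α → β} {g : α → γ} (h : g.FactorsThrough f) :
    (s.image g).card ≤ (s.image f).card := by
  rcases s.eq_empty_or_nonempty with rfl | ⟨a, -⟩
  · exact le_rfl
  have himage : s.image g = (s.image f).image (Function.extend f g fun _ => g a) := by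
    rw [Finset.image_image]
    exact Finset.image_congr fun x _ => (h.extend_apply _ x).symm
  exact himage ▸ Finset.card_image_le

theorem heights_filter_le_eq_image [Fintype I] (b : I → I → ℝ) (i j : I) :
    (heights b i).filter (· ≤ b i j) =
      (Finset.univ.filter fun k => 0 < b i k ∧ b i k ≤ b i j).image (b i) := by
  ext s
  simp only [mem_heights, Finset.mem_filter, Finset.mem_image, Finset.mem_univ, true_and]
  constructor
  · rintro ⟨⟨⟨k, rfl⟩, hpos⟩, hle⟩
    exact ⟨k, ⟨hpos, hle⟩, rfl⟩
  · rintro ⟨k, ⟨hpos, hle⟩, rfl⟩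
    exact ⟨⟨⟨k, rfl⟩, hpos⟩, hle⟩

theorem normHeight_congr {c : I → I → ℝ} (hb : ∀ i j, 0 ≤ b i j) (hc : ∀ i j, 0 ≤ c i j)
    (hle : ∀ i j k, b i j ≤ b i k ↔ c i j ≤ c i k) (hzero : ∀ i j, b i j = 0 ↔ c i j = 0) :
    normHeight b = normHeight c := by
  cases nonempty_fintype I
  funext i j
  have hfilter : (Finset.univ.filter fun k => 0 < b i k ∧ b i k ≤ b i j) =
      Finset.univ.filter fun k => 0 < c i k ∧ c i k ≤ c i j :=
    Finset.filter_congr fun k _ => by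
      rw [(hb i k).lt_iff_ne', (hc i k).lt_iff_ne', ne_eq, ne_eq, hzero, hle]
  have heq (k l : I) : b i k = b i l ↔ c i k = c i l := by
    rw [le_antisymm_iff, le_antisymm_iff, hle, hle]
  rw [normHeight, normHeight, heights_filter_le_eq_image, heights_filter_le_eq_image, hfilter]
  exact congrArg _ ((card_image_le_card_image_of_factorsThrough _ fun k l => (heq k l).2).antisymm
    (card_image_le_card_image_of_factorsThrough _ fun k l => (heq k l).1))

end Normalize

section Chart

variable {X Y I I' : Type*} [TopologicalSpace X] [TopologicalSpace Y] {p : X} {q : Y}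
  {b : I → I → ℝ} {e : X → I → ℝ} {e' : Y → I → ℝ}

/-- A chart identifies the pointed space `(X, p)` with the rooted tree with heights `b`. -/
structure IsTreeChart (p : X) (b : I → I → ℝ) (e : X → I → ℝ) : Prop where
  continuous : Continuous e
  injective : Function.Injective e
  range_eq : range e = branchTree b
  root : e p = 0

namespace IsTreeChart

theorem exists_homeomorph [CompactSpace X] [CompactSpace Y] (he : IsTreeChart p b e)
    (he' : IsTreeChart q b e') : ∃ h : X ≃ₜ Y, h p = q := by
  have hce := he.continuous.isClosedEmbedding he.injective
  have hce' := he'.continuous.isClosedEmbedding he'.injective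
  refine ⟨hce.toHomeomorph.trans ((Homeomorph.setCongr
    (he.range_eq.trans he'.range_eq.symm)).trans hce'.toHomeomorph.symm), ?_⟩
  rw [Homeomorph.trans_apply, Homeomorph.trans_apply, Homeomorph.symm_apply_eq]
  exact Subtype.ext (he.root.trans he'.root.symm)

theorem reindex {b : I' → I' → ℝ} {e : X → I' → ℝ} (he : IsTreeChart p b e) (g : I ≃ I') :
    IsTreeChart p (fun i j => b (g i) (g j)) fun x i => e x (g i) where
  continuous := continuous_pi fun i => (continuous_apply (g i)).comp he.continuous
  injective x y h := he.injective (g.surjective.injective_comp_right h)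
  range_eq := by
    ext z
    constructor
    · rintro ⟨x, rfl⟩
      obtain ⟨i, t, ht, hx⟩ := he.range_eq.subset ⟨x, rfl⟩
      obtain ⟨i, rfl⟩ := g.surjective i
      exact ⟨i, t, ht, funext fun j => congrFun hx (g j)⟩
    · rintro ⟨i, t, ht, rfl⟩
      obtain ⟨x, hx⟩ := he.range_eq.superset ⟨g i, t, ht, rfl⟩
      exact ⟨x, funext fun j => congrFun hx (g j)⟩
  root := funext fun i => congrFun he.root (g i)

theorem rescale [Finite I] (hb : IsBranching b) (he : IsTreeChart p b e) :
    IsTreeChart p (normHeight b) (rescale b ∘ e) where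
  continuous := (continuous_rescale b).comp he.continuous
  injective := by
    rw [← injOn_univ]
    exact hb.injOn_rescale_branchTree.comp he.injective.injOn
      fun x _ => he.range_eq.subset ⟨x, rfl⟩
  range_eq := by rw [range_comp, he.range_eq, hb.image_rescale_branchTree]
  root := by rw [Function.comp_apply, he.root, rescale_zero]

end IsTreeChart

end Chart

section Hyperspace

variable {I : Type*} {b : I → I → ℝ}

theorem isCompact_subtreeSpace (b : I → I → ℝ) : IsCompact (subtreeSpace b : Set (I → ℝ)) := by
  refine (isCompact_Icc (a := (0 : I → ℝ)) (b := fun i => b i i)).of_isClosed_subset ?_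
    fun y hy => ⟨hy.nonneg, hy.le_diag⟩
  have hinter : (subtreeSpace b : Set (I → ℝ)) = (⋂ i, {y | 0 ≤ y i}) ∩ (⋂ i, {y | y i ≤ b i i}) ∩
      ⋂ i, ⋂ j, {y | min (y i) (b i j) ≤ y j} := by
    ext y
    simp only [mem_inter_iff, mem_iInter, mem_ofPred_eq]
    exact ⟨fun h => ⟨⟨h.nonneg, h.le_diag⟩, h.min_le⟩, fun h => ⟨h.1.1, h.1.2, h.2⟩⟩
  rw [hinter]
  refine ((isClosed_iInter fun i => isClosed_le ?_ ?_).inter (isClosed_iInter fun i =>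
    isClosed_le ?_ ?_)).inter (isClosed_iInter fun i => isClosed_iInter fun j => isClosed_le ?_ ?_)
  all_goals fun_prop

namespace IsBranching

theorem le_of_lt_of_mem_branchTree (hb : IsBranching b) {x : I → ℝ} (hx : x ∈ branchTree b)
    {i j : I} (h : b i j < x i) : x j ≤ b i j := by
  obtain ⟨k, r, -, rfl⟩ := hx
  refine (min_le_right _ _).trans ?_
  rcases min_le_iff.1 (hb.min_le i j k) with hik | hkj
  · exact absurd (h.trans_le (min_le_right _ _)) (hb.symm i k ▸ hik).not_gt
  · exact hkj

theorem eq_branchPoint_of_mem_branchTree (hb : IsBranching b) {x : I → ℝ} (hx : x ∈ branchTree b)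
    {i : I} (h : ∀ j, b i j ≤ x i → x j ≤ b i j) : x = branchPoint b i (x i) := by
  obtain ⟨k, r, hr, rfl⟩ := hx
  rcases le_total r (b k i) with hki | hki
  · rw [show branchPoint b k r i = r from min_eq_left hki, hb.branchPoint_congr hki]
  · have hi : branchPoint b k r i = b k i := min_eq_right hki
    have hrk : r ≤ b k i := by
      simpa only [branchPoint_apply_self hr.2, hb.symm i k] using h k (by rw [hi, hb.symm])
    rw [hi, ← hb.branchPoint_congr le_rfl, hrk.antisymm hki]

theorem branchPoint_inf (hb : IsBranching b) {z : I → ℝ} (hz : IsSubtree b z) (i : I) (t : ℝ) :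
    branchPoint b i t ⊓ z = branchPoint b i (min t (z i)) := by
  have hle (i j : I) : min (b i j) (z i) ≤ min (b i j) (z j) :=
    le_min (min_le_left _ _) (min_comm (z i) _ ▸ hz.min_le i j)
  funext j
  have heq : min (b i j) (z j) = min (b i j) (z i) :=
    (hb.symm i j ▸ hle j i).antisymm (hle i j)
  calc min (min t (b i j)) (z j)
    _ = min t (min (b i j) (z i)) := by rw [min_assoc, heq]
    _ = min (min t (z i)) (b i j) := by rw [min_comm (b i j), min_assoc]

theorem inf_mem_branchTree (hb : IsBranching b) {x z : I → ℝ} (hx : x ∈ branchTree b)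
    (hz : IsSubtree b z) : x ⊓ z ∈ branchTree b := by
  obtain ⟨i, t, ht, rfl⟩ := hx
  exact ⟨i, _, ⟨le_min ht.1 (hz.nonneg i), (min_le_left _ _).trans ht.2⟩, hb.branchPoint_inf hz i t⟩

end IsBranching

namespace IsTreeChart

section Topological

variable {X : Type*} [TopologicalSpace X] {p : X} {e : X → I → ℝ}

theorem mem_branchTree (he : IsTreeChart p b e) (x : X) : e x ∈ branchTree b :=
  he.range_eq ▸ mem_range_self x

/-- Removing the point `z` at height `s` of the branch `i` separates the part of the branch `i`
above `z` from the root. -/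
theorem mem_of_lt_apply [Finite I] (hb : IsBranching b) (he : IsTreeChart p b e) {A : Set X}
    (hA : IsPreconnected A) (hp : p ∈ A) {x z : X} (hx : x ∈ A) {i : I} {s : ℝ} (hs : 0 ≤ s)
    (hz : e z = branchPoint b i s) (hsx : s < e x i) : z ∈ A := by
  by_contra hzA
  have hcont (j : I) : Continuous fun x => e x j := (continuous_apply j).comp he.continuous
  let U : Set X := {w | s < e w i}
  let K : Set X := {w | s ≤ e w i} ∩ ⋂ j ∈ {j | b i j ≤ s}, {w | e w j ≤ b i j}
  have hU : IsOpen U := isOpen_lt continuous_const (hcont i)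
  have hK : IsClosed K := (isClosed_le continuous_const (hcont i)).inter
    (isClosed_biInter fun j _ => isClosed_le (hcont j) continuous_const)
  have hUK : U ⊆ K := fun w (hw : s < e w i) => ⟨hw.le, mem_iInter₂.2 fun j (hj : b i j ≤ s) =>
    hb.le_of_lt_of_mem_branchTree (he.mem_branchTree w) (hj.trans_lt hw)⟩
  have hcover : A ⊆ U ∪ Kᶜ := by
    intro w hwA
    by_contra hw
    obtain ⟨hwU, hwK⟩ := not_or.1 hw
    obtain ⟨hsw, hwK⟩ := not_not.1 hwK
    have hws : e w i = s := (not_lt.1 hwU).antisymm hsw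
    have hwz : e w = e z := by
      rw [hz, ← hws]
      exact hb.eq_branchPoint_of_mem_branchTree (he.mem_branchTree w)
        fun j hj => mem_iInter₂.1 hwK j (hj.trans_eq hws)
    exact hzA (he.injective hwz ▸ hwA)
  have hAU : A ⊆ U := hA.subset_left_of_subset_union hU hK.isOpen_compl
    (disjoint_compl_right.mono_left hUK) hcover ⟨x, hx, hsx⟩
  have hsp : s < e p i := hAU hp
  rw [he.root] at hsp
  exact hsp.not_ge hs

theorem mem_of_le [Finite I] (hb : IsBranching b) (he : IsTreeChart p b e) {A : Set X}
    (hA : IsPreconnected A) (hp : p ∈ A) {x z : X} (hx : x ∈ A) (hzx : e z ≤ e x) : z ∈ A := by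
  obtain ⟨k, r, hr, hxk⟩ := he.mem_branchTree x
  obtain ⟨i, s, hs, hzi⟩ := he.mem_branchTree z
  have hsr : s ≤ min r (b k i) := by
    have hi := hzx i
    rwa [hzi, hxk, branchPoint_apply_self hs.2] at hi
  have hzk : e z = branchPoint b k s := by
    rw [hzi, hb.branchPoint_congr (hb.symm i k ▸ hsr.trans (min_le_right _ _))]
  rcases (hsr.trans (min_le_left _ _)).eq_or_lt with rfl | hlt
  · exact he.injective (hxk.trans hzk.symm) ▸ hx
  · refine he.mem_of_lt_apply hb hA hp hx hs.1 hzk ?_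
    rwa [hxk, branchPoint_apply_self hr.2]

theorem root_mem_preimage_Iic (he : IsTreeChart p b e) {y : I → ℝ} (hy : IsSubtree b y) :
    p ∈ e ⁻¹' Iic y := by
  rw [mem_preimage, he.root]
  exact hy.nonneg

theorem isConnected_preimage_Iic [CompactSpace X] (hb : IsBranching b) (he : IsTreeChart p b e)
    {y : I → ℝ} (hy : IsSubtree b y) : IsConnected (e ⁻¹' Iic y) := by
  refine ⟨⟨p, he.root_mem_preimage_Iic hy⟩, ?_⟩
  rw [← (he.continuous.isClosedEmbedding he.injective).isInducing.isPreconnected_image]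
  refine isPreconnected_of_forall 0 ?_
  rintro _ ⟨x, hx, rfl⟩
  obtain ⟨i, t, ht, hxt⟩ := he.mem_branchTree x
  refine ⟨branchPoint b i '' Icc 0 t, ?_, ⟨0, left_mem_Icc.2 ht.1, hb.branchPoint_zero i⟩,
    ⟨t, right_mem_Icc.2 ht.1, hxt.symm⟩,
    isPreconnected_Icc.image _ (continuous_branchPoint b i).continuousOn⟩
  rintro _ ⟨s, hs, rfl⟩
  obtain ⟨z, hz⟩ := he.range_eq.superset ⟨i, s, ⟨hs.1, hs.2.trans ht.2⟩, rfl⟩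
  refine ⟨z, ?_, hz⟩
  rw [mem_preimage, hz]
  exact ((branchPoint_mono b i hs.2).trans_eq hxt.symm).trans hx

theorem exists_eq_preimage_Iic [Finite I] (hb : IsBranching b) (he : IsTreeChart p b e) {A : Set X}
    (hA : IsCompact A) (hA' : IsPreconnected A) (hp : p ∈ A) :
    ∃ y ∈ subtreeSpace b, e ⁻¹' Iic y = A := by
  choose a ha hmax using fun i : I =>
    hA.exists_isMaxOn ⟨p, hp⟩ ((continuous_apply i).comp he.continuous).continuousOn
  have hsub (x : X) : IsSubtree b (e x) := hb.isSubtree_of_mem_branchTree (he.mem_branchTree x)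
  refine ⟨fun i => e (a i) i,
    ⟨fun i => (hsub (a i)).nonneg i, fun i => (hsub (a i)).le_diag i,
      fun i j => ((hsub (a i)).min_le i j).trans (hmax j (ha i))⟩, ?_⟩
  refine Subset.antisymm (fun x hx => ?_) fun x hx i => hmax i hx
  obtain ⟨i, t, ht, hxt⟩ := he.mem_branchTree x
  refine he.mem_of_le hb hA' hp (ha i) ?_
  rw [hxt, (hsub (a i)).branchPoint_le_iff ht.2]
  simpa only [hxt, branchPoint_apply_self ht.2] using hx i

theorem le_of_preimage_Iic_subset (he : IsTreeChart p b e) {y z : I → ℝ} (hy : IsSubtree b y)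
    (h : e ⁻¹' Iic y ⊆ e ⁻¹' Iic z) : y ≤ z := by
  intro i
  obtain ⟨x, hx⟩ := he.range_eq.superset ⟨i, y i, ⟨hy.nonneg i, hy.le_diag i⟩, rfl⟩
  have hxy : e x ≤ y := hx ▸ (hy.branchPoint_le_iff (hy.le_diag i)).2 le_rfl
  simpa only [hx, branchPoint_apply_self (hy.le_diag i)] using h hxy i

end Topological

variable {X : Type u} [MetricSpace X] {p : X} {e : X → I → ℝ}

theorem exists_mem_preimage_Iic_dist_le [Fintype I] (hb : IsBranching b)
    (he : IsTreeChart p b e) (y z : subtreeSpace b) {x : X} (hx : x ∈ e ⁻¹' Iic y.1) :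
    ∃ w ∈ e ⁻¹' Iic z.1, dist (e x) (e w) ≤ dist y z := by
  obtain ⟨w, hw⟩ := he.range_eq.superset (hb.inf_mem_branchTree (he.mem_branchTree x) z.2)
  refine ⟨w, hw.trans_le inf_le_right, ?_⟩
  rw [hw, inf_comm, dist_pi_le_iff dist_nonneg]
  intro i
  have hxy : y.1 i ⊓ e x i = e x i := inf_eq_right.2 (hx i)
  calc dist (e x i) ((z.1 ⊓ e x) i)
    _ = |y.1 i ⊓ e x i - z.1 i ⊓ e x i| := by rw [hxy, Real.dist_eq]; rfl
    _ ≤ |y.1 i - z.1 i| := abs_inf_sub_inf_le_abs _ _ _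
    _ ≤ dist y z := dist_le_pi_dist y.1 z.1 i

variable [CompactSpace X]

/-- The continuum of all points lying below the subtree `y`, as an element of `C(p, X)`. -/
def toCP (hb : IsBranching b) (he : IsTreeChart p b e) (y : subtreeSpace b) : CP X p :=
  ⟨⟨⟨e ⁻¹' Iic y.1, (isClosed_Iic.preimage he.continuous).isCompact⟩,
    (he.isConnected_preimage_Iic hb y.2).nonempty⟩,
    he.isConnected_preimage_Iic hb y.2, he.root_mem_preimage_Iic y.2⟩

theorem toCP_injective (hb : IsBranching b) (he : IsTreeChart p b e) :
    Function.Injective (he.toCP hb) := fun y z h =>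
  have hset : e ⁻¹' Iic y.1 = e ⁻¹' Iic z.1 := congrArg CP.set h
  Subtype.ext ((he.le_of_preimage_Iic_subset y.2 hset.subset).antisymm
    (he.le_of_preimage_Iic_subset z.2 hset.superset))

theorem toCP_surjective [Finite I] (hb : IsBranching b) (he : IsTreeChart p b e) :
    Function.Surjective (he.toCP hb) := fun A =>
  have ⟨y, hy, h⟩ := he.exists_eq_preimage_Iic hb A.1.isCompact A.2.1.isPreconnected A.2.2
  ⟨⟨y, hy⟩, Subtype.ext (NonemptyCompacts.ext h)⟩

theorem exists_dist_lt [Fintype I] (he : IsTreeChart p b e) {ε : ℝ} (hε : 0 < ε) :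
    ∃ δ > 0, ∀ x z, dist (e x) (e z) < δ → dist x z < ε := by
  let h := (he.continuous.isClosedEmbedding he.injective).toHomeomorph
  have : CompactSpace (range e) := isCompact_iff_compactSpace.1 (isCompact_range he.continuous)
  obtain ⟨δ, hδ, hlt⟩ := Metric.uniformContinuous_iff.1
    (CompactSpace.uniformContinuous_of_continuous h.symm.continuous) ε hε
  refine ⟨δ, hδ, fun x z hxz => ?_⟩
  simpa only [h.symm_apply_apply] using hlt (a := h x) (b := h z) hxz

theorem continuous_toCP [Finite I] (hb : IsBranching b) (he : IsTreeChart p b e) :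
    Continuous (he.toCP hb) := by
  cases nonempty_fintype I
  rw [Metric.continuous_iff]
  intro y ε hε
  obtain ⟨δ, hδ, hlt⟩ := he.exists_dist_lt (half_pos hε)
  have hclose (y z : subtreeSpace b) (hyz : dist y z < δ) :
      ∀ x ∈ e ⁻¹' Iic y.1, ∃ w ∈ e ⁻¹' Iic z.1, dist x w ≤ ε / 2 := fun x hx =>
    have ⟨w, hw, hxw⟩ := he.exists_mem_preimage_Iic_dist_le hb y z hx
    ⟨w, hw, (hlt x w (hxw.trans_lt hyz)).le⟩
  refine ⟨δ, hδ, fun z hz => lt_of_le_of_lt ?_ (half_lt_self hε)⟩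
  exact Metric.hausdorffDist_le_of_mem_dist (half_pos hε).le (hclose z y hz)
    (hclose y z (dist_comm z y ▸ hz))

theorem nonempty_homeomorph_CP [Finite I] (hb : IsBranching b) (he : IsTreeChart p b e) :
    Nonempty (subtreeSpace b ≃ₜ CP X p) :=
  have : CompactSpace (subtreeSpace b) := isCompact_iff_compactSpace.1 (isCompact_subtreeSpace b)
  ⟨(he.continuous_toCP hb).homeoOfEquivCompactToT2
    (f := .ofBijective _ ⟨he.toCP_injective hb, he.toCP_surjective hb⟩)⟩

end IsTreeChart

end Hyperspace

section Arcs

variable {X Y : Type*} [TopologicalSpace X] [TopologicalSpace Y]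

theorem exists_homeomorph_of_bijOn [T2Space Y] {A : Set X} {B : Set Y} {f : X → Y}
    (hA : IsCompact A) (hf : ContinuousOn f A) (hAB : BijOn f A B) :
    ∃ h : A ≃ₜ B, ∀ a, (h a : Y) = f a :=
  have : CompactSpace A := isCompact_iff_compactSpace.1 hA
  ⟨(hf.mapsToRestrict hAB.mapsTo).homeoOfEquivCompactToT2 (f := hAB.equiv), fun _ => rfl⟩

theorem homeomorph_Icc_apply_zero (φ : Icc (0 : ℝ) 1 ≃ₜ Icc (0 : ℝ) 1) : φ 0 = 0 ∨ φ 0 = 1 := by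
  rcases φ.continuous.strictMono_of_inj φ.injective with h | h
  · exact .inl (h.orderIsoOfSurjective φ φ.surjective).map_bot
  · exact .inr (h.dual_right.orderIsoOfSurjective _
      (OrderDual.toDual.surjective.comp φ.surjective)).map_bot

theorem IsArcSet.isCompact {A : Set X} (hA : IsArcSet A) : IsCompact A :=
  have ⟨h⟩ := hA
  isCompact_iff_compactSpace.2 h.symm.compactSpace

namespace IsArcFromTo

variable {A : Set X} {x y : X}

theorem isArcSet (hA : IsArcFromTo A x y) : IsArcSet A :=
  have ⟨h, _, _⟩ := hA
  ⟨h.symm⟩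

theorem left_mem (hA : IsArcFromTo A x y) : x ∈ A := by
  obtain ⟨h, rfl, -⟩ := hA
  exact Subtype.property _

theorem right_mem (hA : IsArcFromTo A x y) : y ∈ A := by
  obtain ⟨h, -, rfl⟩ := hA
  exact Subtype.property _

theorem eq_or_eq (hA : IsArcFromTo A x y) {z : X} (hz : IsArcEndpoint A z) : z = x ∨ z = y := by
  obtain ⟨h, rfl, rfl⟩ := hA
  obtain ⟨-, k, rfl, -⟩ := hz
  have hk : k 0 = h ((k.trans h.symm) 0) := (h.apply_symm_apply _).symm
  rcases homeomorph_Icc_apply_zero (k.trans h.symm) with h0 | h1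
  · exact .inl (congrArg Subtype.val (hk.trans (congrArg h h0)))
  · exact .inr (congrArg Subtype.val (hk.trans (congrArg h h1)))

theorem of_bijOn [T2Space Y] {B : Set Y} {f : X → Y} (hA : IsCompact A) (hf : ContinuousOn f A)
    (hAB : BijOn f A B) (hx : x ∈ A) (hy : y ∈ A) (hB : IsArcFromTo B (f x) (f y)) :
    IsArcFromTo A x y := by
  obtain ⟨k, hk⟩ := exists_homeomorph_of_bijOn hA hf hAB
  obtain ⟨h, hx', hy'⟩ := hB
  have hk_symm {z : X} (hz : z ∈ A) {c : B} (hc : (c : Y) = f z) : (k.symm c : X) = z :=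
    congrArg Subtype.val (k.symm_apply_eq.2 (Subtype.ext (hc.trans (hk ⟨z, hz⟩).symm)))
  exact ⟨h.trans k.symm, hk_symm hx hx', hk_symm hy hy'⟩

end IsArcFromTo

theorem isArcFromTo_image [T2Space X] {γ : ℝ → X} {r s : ℝ} (hrs : r < s)
    (hγ : ContinuousOn γ (Icc r s)) (hinj : InjOn γ (Icc r s)) :
    IsArcFromTo (γ '' Icc r s) (γ r) (γ s) := by
  obtain ⟨h, hh⟩ := exists_homeomorph_of_bijOn isCompact_Icc hγ hinj.bijOn_image
  refine ⟨(iccHomeoI r s hrs).symm.trans h, ?_, ?_⟩ <;>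
    simp [hh]

/-- `τ` restricts to a homeomorphism from the arc `A` onto `[0, 1]`. -/
structure IsArcCoord (A : Set X) (τ : X → ℝ) : Prop where
  continuousOn : ContinuousOn τ A
  bijOn : BijOn τ A (Icc 0 1)

theorem IsArcFromTo.exists_isArcCoord {A : Set X} {x y : X} (hA : IsArcFromTo A x y) :
    ∃ τ, IsArcCoord A τ ∧ τ x = 0 ∧ τ y = 1 := by
  obtain ⟨h, rfl, rfl⟩ := hA
  let τ : X → ℝ := Function.extend Subtype.val (fun a => (h.symm a : ℝ)) 0
  have hτ (a : A) : τ a = h.symm a := Subtype.val_injective.extend_apply _ _ a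
  refine ⟨τ, ⟨?_, ?_, ?_, ?_⟩, ?_, ?_⟩
  · rw [continuousOn_iff_continuous_domRestrict]
    exact (continuous_subtype_val.comp h.symm.continuous).congr fun a => (hτ a).symm
  · exact fun a ha => hτ ⟨a, ha⟩ ▸ (h.symm ⟨a, ha⟩).2
  · intro a ha c hc hac
    rw [hτ ⟨a, ha⟩, hτ ⟨c, hc⟩] at hac
    exact congrArg Subtype.val (h.symm.injective (Subtype.ext hac))
  · exact fun t ht => ⟨h ⟨t, ht⟩, (h ⟨t, ht⟩).2, by rw [hτ, h.symm_apply_apply]⟩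
  · rw [hτ, h.symm_apply_apply]
  · rw [hτ, h.symm_apply_apply]

section Circle

theorem bijOn_circleExp_pi_mul :
    BijOn (fun t : ℝ => Circle.exp (Real.pi * t)) (Ioc (-1) 1) univ := by
  refine Circle.argPartialEquiv.symm.bijOn.comp (InvOn.bijOn (f' := fun t => t / Real.pi)
    ⟨fun t _ => mul_div_cancel_left₀ t Real.pi_ne_zero,
      fun t _ => mul_div_cancel₀ t Real.pi_ne_zero⟩ ?_ ?_)
  · exact fun t ht => ⟨by nlinarith [ht.1, Real.pi_pos], by nlinarith [ht.2, Real.pi_pos]⟩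
  · exact fun t ht => ⟨by rw [lt_div_iff₀ Real.pi_pos]; linarith [ht.1],
      (div_le_one Real.pi_pos).2 ht.2⟩

open Classical in
/-- The coordinate `τ` on `A` glued to the coordinate `-σ` off `A`. -/
noncomputable def signedCoord (A : Set X) (τ σ : X → ℝ) (z : X) : ℝ := if z ∈ A then τ z else -σ z

variable {A B : Set X} {τ σ : X → ℝ} {x y : X}

theorem bijOn_signedCoord (hA : IsArcCoord A τ) (hB : IsArcCoord B σ) (hAB : A ∩ B = {x, y})
    (hσx : σ x = 0) (hσy : σ y = 1) : BijOn (signedCoord A τ σ) (A ∪ B) (Ioc (-1) 1) := by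
  have hxB : x ∈ B := (hAB.superset (mem_insert x _)).2
  have hyB : y ∈ B := (hAB.superset (mem_insert_of_mem x rfl)).2
  have hxy : y ≠ x := fun h => one_ne_zero (hσy.symm.trans ((congrArg σ h).trans hσx))
  have hbijA : BijOn (signedCoord A τ σ) A (Icc 0 1) :=
    hA.bijOn.congr fun z hz => (if_pos hz).symm
  have hbijB : BijOn (signedCoord A τ σ) (B \ A) (Ioo (-1) 0) := by
    have hdiff : B \ A = (B \ {x}) \ {y} := by
      rw [← sdiff_inter_self_eq_sdiff, hAB, sdiff_sdiff, singleton_union]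
    have hσ : BijOn σ (B \ A) (Ioo 0 1) := by
      have h := (hB.bijOn.sdiff_singleton hxB).sdiff_singleton (a := y) ⟨hyB, hxy⟩
      rwa [← hdiff, hσx, hσy, Icc_sdiff_left, Ioc_sdiff_right] at h
    have hneg : BijOn (Neg.neg : ℝ → ℝ) (Ioo 0 1) (Ioo (-1) 0) := by
      simpa only [image_neg_Ioo, neg_zero]
        using neg_injective.injOn.bijOn_image (s := Ioo (0 : ℝ) 1)
    exact (hneg.comp hσ).congr fun z hz => (if_neg hz.2).symm
  have hdisj (z) (hz : z ∈ A) (w) (hw : w ∈ B \ A) : signedCoord A τ σ z ≠ signedCoord A τ σ w :=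
    ((hbijB.mapsTo hw).2.trans_le (hbijA.mapsTo hz).1).ne'
  have h := hbijA.union hbijB
    ((injOn_union disjoint_sdiff_right).2 ⟨hbijA.injOn, hbijB.injOn, hdisj⟩)
  rwa [union_sdiff_self, union_comm (Icc 0 1),
    Ioo_union_Icc_eq_Ioc neg_one_lt_zero zero_le_one] at h

theorem continuousOn_circleExp_signedCoord (hA : IsArcCoord A τ) (hB : IsArcCoord B σ)
    (hcA : IsClosed A) (hcB : IsClosed B) (hAB : A ∩ B = {x, y}) (hτx : τ x = 0) (hσx : σ x = 0)
    (hτy : τ y = 1) (hσy : σ y = 1) :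
    ContinuousOn (fun z => Circle.exp (Real.pi * signedCoord A τ σ z)) (A ∪ B) := by
  have hexp : Continuous fun t : ℝ => Circle.exp (Real.pi * t) :=
    Circle.exp.continuous.comp (continuous_const_mul Real.pi)
  refine ContinuousOn.union_of_isClosed ?_ ?_ hcA hcB
  · refine (hexp.comp_continuousOn hA.continuousOn).congr fun z hz => ?_
    simp only [signedCoord, if_pos hz, Function.comp_apply]
  · refine (hexp.comp_continuousOn hB.continuousOn.neg).congr fun z hz => ?_
    by_cases hzA : z ∈ A
    · simp only [signedCoord, if_pos hzA, Function.comp_apply, Pi.neg_apply]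
      rcases hAB.subset ⟨hzA, hz⟩ with rfl | rfl
      · rw [hτx, hσx, neg_zero]
      · rw [hτy, hσy, ← Circle.exp_sub_two_pi]
        ring_nf
    · simp only [signedCoord, if_neg hzA, Function.comp_apply, Pi.neg_apply]

theorem IsArcFromTo.isSimpleClosedCurve_union [T2Space X] (hA : IsArcFromTo A x y)
    (hB : IsArcFromTo B x y) (hAB : A ∩ B = {x, y}) : IsSimpleClosedCurve (A ∪ B) := by
  obtain ⟨τ, hτ, hτx, hτy⟩ := hA.exists_isArcCoord
  obtain ⟨σ, hσ, hσx, hσy⟩ := hB.exists_isArcCoord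
  have hcA := hA.isArcSet.isCompact
  have hcB := hB.isArcSet.isCompact
  obtain ⟨h, -⟩ := exists_homeomorph_of_bijOn (hcA.union hcB)
    (continuousOn_circleExp_signedCoord hτ hσ hcA.isClosed hcB.isClosed hAB hτx hσx hτy hσy)
    (bijOn_circleExp_pi_mul.comp (bijOn_signedCoord hτ hσ hAB hσx hσy))
  exact ⟨h.trans (Homeomorph.Set.univ Circle)⟩

end Circle

end Arcs

section Geodesic

variable {I : Type*} {b : I → I → ℝ} {i j : I} {m s t u : ℝ}

/-- The path in the tree of `b` which comes down the branch `i` to the height `m`, reached at time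
`0`, and then goes up the branch `j`. Here `m ≤ b i j`, so that both branches agree up to `m`. -/
def geodesic (b : I → I → ℝ) (i j : I) (m u : ℝ) : I → ℝ :=
  branchPoint b i (m + u⁻) ⊔ branchPoint b j (m + u⁺)

theorem continuous_geodesic (b : I → I → ℝ) (i j : I) (m : ℝ) : Continuous (geodesic b i j m) :=
  continuous_pi fun _ => by
    simp only [geodesic, branchPoint, Pi.sup_apply]
    fun_prop

theorem geodesic_neg (b : I → I → ℝ) (i j : I) (m u : ℝ) :
    geodesic b i j m (-u) = geodesic b j i m u := by
  rw [geodesic, geodesic, negPart_neg, posPart_neg, sup_comm]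

/-- The height of `z` along the branch `j` minus its height along the branch `i`, truncated at `t`
and `s`. Along a geodesic between the heights `s` of `i` and `t` of `j`, this is the time. -/
def geodesicTime (i j : I) (s t : ℝ) (z : I → ℝ) : ℝ := min (z j) t - min (z i) s

theorem geodesicTime_swap (i j : I) (s t : ℝ) (z : I → ℝ) :
    geodesicTime i j s t z = -geodesicTime j i t s z :=
  (neg_sub _ _).symm

namespace IsBranching

theorem geodesic_of_nonneg (hb : IsBranching b) (hm : m ≤ b i j) (hu : 0 ≤ u) :
    geodesic b i j m u = branchPoint b j (m + u) := by
  rw [geodesic, negPart_of_nonneg hu, posPart_of_nonneg hu, add_zero, hb.branchPoint_congr hm]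
  exact sup_of_le_right (branchPoint_mono b j (le_add_of_nonneg_right hu))

theorem geodesic_of_nonpos (hb : IsBranching b) (hm : m ≤ b i j) (hu : u ≤ 0) :
    geodesic b i j m u = branchPoint b i (m - u) := by
  rw [← neg_neg u, geodesic_neg, hb.geodesic_of_nonneg (hb.symm i j ▸ hm) (neg_nonneg.2 hu),
    sub_neg_eq_add]

theorem geodesicTime_geodesic_of_nonneg (hb : IsBranching b) (ht : t ≤ b j j)
    (hm : min (min s t) (b i j) = m) (hu : 0 ≤ u) (hut : u ≤ t - m) :
    geodesicTime i j s t (geodesic b i j m u) = u := by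
  have hmt : m + u ≤ t := by linarith
  have hi : min (min (m + u) (b j i)) s = m := by
    rw [hb.symm j i]
    grind
  rw [geodesicTime, hb.geodesic_of_nonneg (hm ▸ min_le_right _ _) hu,
    branchPoint_apply_self (hmt.trans ht), min_eq_left hmt, branchPoint, hi, add_sub_cancel_left]

theorem leftInvOn_geodesicTime (hb : IsBranching b) (hs : s ≤ b i i) (ht : t ≤ b j j)
    (hm : min (min s t) (b i j) = m) :
    LeftInvOn (geodesicTime i j s t) (geodesic b i j m) (Icc (m - s) (t - m)) := by
  intro u hu
  rcases le_total 0 u with h | h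
  · exact hb.geodesicTime_geodesic_of_nonneg ht hm h hu.2
  · rw [geodesicTime_swap, ← neg_neg u, geodesic_neg, hb.geodesicTime_geodesic_of_nonneg hs
      (by rw [min_comm t, hb.symm, hm]) (neg_nonneg.2 h) (by linarith [hu.1])]

theorem geodesic_mem_branchTree (hb : IsBranching b) (hm0 : 0 ≤ m) (hm : m ≤ b i j)
    (hs : s ≤ b i i) (ht : t ≤ b j j) (hu : u ∈ Icc (m - s) (t - m)) :
    geodesic b i j m u ∈ branchTree b := by
  rcases le_total 0 u with h | h
  · exact ⟨j, m + u, ⟨by linarith, by linarith [hu.2]⟩, hb.geodesic_of_nonneg hm h⟩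
  · exact ⟨i, m - u, ⟨by linarith, by linarith [hu.1]⟩, hb.geodesic_of_nonpos hm h⟩

theorem exists_isArcFromTo_branchTree (hb : IsBranching b) {x y : I → ℝ} (hx : x ∈ branchTree b)
    (hy : y ∈ branchTree b) (hxy : x ≠ y) :
    ∃ B ⊆ branchTree b, IsArcFromTo B x y := by
  obtain ⟨i, s, hs, rfl⟩ := hx
  obtain ⟨j, t, ht, rfl⟩ := hy
  obtain ⟨m, hm⟩ : ∃ m, min (min s t) (b i j) = m := ⟨_, rfl⟩
  have hmij : m ≤ b i j := hm ▸ min_le_right _ _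
  have hms : m ≤ s := hm ▸ (min_le_left _ _).trans (min_le_left _ _)
  have hmt : m ≤ t := hm ▸ (min_le_left _ _).trans (min_le_right _ _)
  have hleft : geodesic b i j m (m - s) = branchPoint b i s := by
    rw [hb.geodesic_of_nonpos hmij (sub_nonpos.2 hms), sub_sub_cancel]
  have hright : geodesic b i j m (t - m) = branchPoint b j t := by
    rw [hb.geodesic_of_nonneg hmij (sub_nonneg.2 hmt), add_sub_cancel]
  have hlt : m - s < t - m := by
    refine ((sub_nonpos.2 hms).trans (sub_nonneg.2 hmt)).lt_of_ne fun h => hxy ?_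
    rw [← hleft, ← hright, h]
  have hm0 : 0 ≤ m := hm ▸ le_min (le_min hs.1 ht.1) (hb.nonneg i j)
  refine ⟨geodesic b i j m '' Icc (m - s) (t - m), ?_, hleft ▸ hright ▸ isArcFromTo_image hlt
    (continuous_geodesic b i j m).continuousOn (hb.leftInvOn_geodesicTime hs.2 ht.2 hm).injOn⟩
  rintro _ ⟨u, hu, rfl⟩
  exact hb.geodesic_mem_branchTree hm0 hmij hs.2 ht.2 hu

end IsBranching

end Geodesic

section Attach

variable {X I : Type*} {b : I → I → ℝ} {i : I} {s : ℝ}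

/-- Extends the heights `w` by the height `r` along a new branch `none`. -/
def extendHeights (r : ℝ) (w : I → ℝ) : Option I → ℝ := fun o => o.elim r w

theorem extendHeights_inj {r r' : ℝ} {w w' : I → ℝ} :
    extendHeights r w = extendHeights r' w' ↔ r = r' ∧ w = w' :=
  ⟨fun h => ⟨congrFun h none, funext fun j => congrFun h (some j)⟩, fun h => by rw [h.1, h.2]⟩

/-- The branching heights of the tree obtained by attaching a new branch of length one at the
point of height `s` on the branch `i`. -/
def attachBranch (b : I → I → ℝ) (i : I) (s : ℝ) : Option I → Option I → ℝ
  | none => extendHeights (s + 1) (branchPoint b i s)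
  | some k => extendHeights (branchPoint b i s k) (b k)

theorem IsBranching.attachBranch (hb : IsBranching b) (hs : 0 ≤ s) :
    IsBranching (attachBranch b i s) where
  nonneg := by
    have hz := (hb.isSubtree_branchPoint i hs).nonneg
    rintro (_ | j) (_ | k)
    exacts [add_nonneg hs zero_le_one, hz k, hz j, hb.nonneg j k]
  symm := by
    rintro (_ | j) (_ | k)
    exacts [rfl, rfl, rfl, hb.symm j k]
  min_le := by
    have hz := hb.isSubtree_branchPoint i hs
    have hle (k : I) : branchPoint b i s k ≤ s + 1 := (min_le_left _ _).trans (by linarith)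
    rintro (_ | j) (_ | k) (_ | l)
    · exact min_le_left _ _
    · exact (min_le_left _ _).trans (hle l)
    · exact min_le_right _ _
    · exact hz.min_le l k
    · exact min_le_left _ _
    · have h := hz.min_le l j
      rw [min_comm, hb.symm l j] at h
      exact h
    · exact (min_le_min (min_le_right _ _) (min_le_right _ _)).trans
        (hb.symm i j ▸ hb.min_le j k i)
    · exact hb.min_le j k l

theorem branchPoint_attachBranch_none {r : ℝ} (hr : r ∈ Icc s (s + 1)) :
    branchPoint (attachBranch b i s) none r = extendHeights r (branchPoint b i s) :=
  funext fun
    | none => min_eq_left hr.2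
    | some _ => min_eq_right ((min_le_left _ _).trans hr.1)

theorem branchPoint_attachBranch_some (hb : IsBranching b) (k : I) (r : ℝ) :
    branchPoint (attachBranch b i s) (some k) r =
      extendHeights (min (branchPoint b k r i) s) (branchPoint b k r) :=
  funext fun
    | none => by
      change min r (min s (b i k)) = min (min r (b k i)) s
      rw [hb.symm i k, min_comm s, min_assoc]
    | some _ => rfl

theorem branchTree_attachBranch (hb : IsBranching b) (h0 : 0 ≤ s) (hs : s ≤ b i i) :
    branchTree (attachBranch b i s) =
      (fun w => extendHeights (min (w i) s) w) '' branchTree b ∪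
        (fun t => extendHeights (s + t) (branchPoint b i s)) '' Icc 0 1 := by
  have hb' := hb.attachBranch (i := i) h0
  have hsome {k : I} {r : ℝ} (hr : r ∈ Icc 0 (b k k)) :
      branchPoint (attachBranch b i s) (some k) r ∈
        (fun w => extendHeights (min (w i) s) w) '' branchTree b :=
    ⟨_, ⟨k, r, hr, rfl⟩, (branchPoint_attachBranch_some hb k r).symm⟩
  apply Subset.antisymm
  · rintro _ ⟨_ | k, r, hr, rfl⟩
    · have hrs : r ≤ s + 1 := hr.2
      rcases le_total s r with h | h
      · refine .inr ⟨r - s, ⟨sub_nonneg.2 h, by linarith⟩, ?_⟩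
        simp only [branchPoint_attachBranch_none ⟨h, hrs⟩, add_sub_cancel]
      · have hri : r ≤ attachBranch b i s none (some i) :=
          h.trans_eq (branchPoint_apply_self hs).symm
        rw [hb'.branchPoint_congr hri]
        exact .inl (hsome ⟨hr.1, h.trans hs⟩)
    · exact .inl (hsome hr)
  · rintro _ (⟨_, ⟨k, r, hr, rfl⟩, rfl⟩ | ⟨t, ht, rfl⟩)
    · exact ⟨some k, r, hr, (branchPoint_attachBranch_some hb k r).symm⟩
    · have hst : s + t ∈ Icc s (s + 1) := ⟨by linarith [ht.1], by linarith [ht.2]⟩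
      exact ⟨none, s + t, ⟨h0.trans hst.1, hst.2⟩, (branchPoint_attachBranch_none hst).symm⟩

open Classical in
/-- The coordinates of a tree after attaching the arc `A` with coordinate `τ` at the point of
height `s` on the branch `i`. -/
noncomputable def attachCoord (b : I → I → ℝ) (e : X → I → ℝ) (A : Set X) (τ : X → ℝ) (i : I)
    (s : ℝ) (x : X) : Option I → ℝ :=
  if x ∈ A then extendHeights (s + τ x) (branchPoint b i s)
  else extendHeights (min (e x i) s) (e x)

variable {K A : Set X} {e : X → I → ℝ} {τ : X → ℝ} {x : X}

theorem attachCoord_eqOn_arc : EqOn (attachCoord b e A τ i s)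
    (fun a => extendHeights (s + τ a) (branchPoint b i s)) A :=
  fun _ ha => if_pos ha

theorem attachCoord_eqOn (hKA : K ∩ A = {x}) (hτx : τ x = 0) (hs : s ≤ b i i)
    (hex : e x = branchPoint b i s) :
    EqOn (attachCoord b e A τ i s) (fun k => extendHeights (min (e k i) s) (e k)) K := by
  intro k hk
  by_cases hkA : k ∈ A
  · obtain rfl : k = x := hKA.subset ⟨hk, hkA⟩
    simp only [attachCoord_eqOn_arc hkA, hτx, hex, branchPoint_apply_self hs, min_self, add_zero]
  · exact if_neg hkA

end Attach

section LocalChart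

/-- `e` identifies the subspace `K` with the rooted tree with heights `b`, and `p` with the
root. -/
structure IsChartOn {X I : Type*} [TopologicalSpace X] (K : Set X) (p : X) (b : I → I → ℝ)
    (e : X → I → ℝ) : Prop where
  continuousOn : ContinuousOn e K
  bijOn : BijOn e K (branchTree b)
  mem : p ∈ K
  root : e p = 0

variable {X I : Type*} [TopologicalSpace X] {K : Set X} {p : X} {b : I → I → ℝ} {e : X → I → ℝ}

theorem IsChartOn.isTreeChart (he : IsChartOn univ p b e) : IsTreeChart p b e :=
  ⟨continuousOn_univ.1 he.continuousOn, injOn_univ.1 he.bijOn.injOn,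
    image_univ ▸ he.bijOn.image_eq, he.root⟩

theorem IsChartOn.exists_isArcFromTo [T2Space X] (hb : IsBranching b) (he : IsChartOn K p b e)
    (hK : IsCompact K) {x y : X} (hx : x ∈ K) (hy : y ∈ K) (hxy : x ≠ y) :
    ∃ B ⊆ K, IsArcFromTo B x y := by
  obtain ⟨B, hBT, hB⟩ := hb.exists_isArcFromTo_branchTree (he.bijOn.mapsTo hx)
    (he.bijOn.mapsTo hy) (he.bijOn.injOn.ne hx hy hxy)
  have hclosed : IsClosed (K ∩ e ⁻¹' B) :=
    he.continuousOn.preimage_isClosed_of_isClosed hK.isClosed hB.isArcSet.isCompact.isClosed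
  exact ⟨K ∩ e ⁻¹' B, inter_subset_left, .of_bijOn (hK.of_isClosed_subset hclosed inter_subset_left)
    (he.continuousOn.mono inter_subset_left) (he.bijOn.subset_right hBT) ⟨hx, hB.left_mem⟩
    ⟨hy, hB.right_mem⟩ hB⟩

theorem continuousOn_extendHeights {f : X → ℝ} {g : X → I → ℝ} (hf : ContinuousOn f K)
    (hg : ContinuousOn g K) : ContinuousOn (fun x => extendHeights (f x) (g x)) K :=
  continuousOn_pi.2 fun
    | none => hf
    | some j => (continuous_apply j).comp_continuousOn hg

theorem IsChartOn.attach (hb : IsBranching b) (he : IsChartOn K p b e) (hK : IsClosed K)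
    {A : Set X} (hA : IsClosed A) {τ : X → ℝ} (hτ : IsArcCoord A τ) {x : X} (hKA : K ∩ A = {x})
    (hτx : τ x = 0) {i : I} {s : ℝ} (h0 : 0 ≤ s) (hs : s ≤ b i i) (hex : e x = branchPoint b i s) :
    IsChartOn (K ∪ A) p (attachBranch b i s) (attachCoord b e A τ i s) := by
  have hx : x ∈ K ∩ A := hKA ▸ mem_singleton x
  have hcoordK := attachCoord_eqOn hKA hτx hs hex
  have hcoordA : EqOn (attachCoord b e A τ i s) _ A := attachCoord_eqOn_arc
  have hbijK : BijOn (attachCoord b e A τ i s) K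
      ((fun w => extendHeights (min (w i) s) w) '' branchTree b) :=
    ((InjOn.bijOn_image fun _ _ _ _ h => (extendHeights_inj.1 h).2).comp he.bijOn).congr
      hcoordK.symm
  have hbijA : BijOn (attachCoord b e A τ i s) A
      ((fun t => extendHeights (s + t) (branchPoint b i s)) '' Icc 0 1) :=
    ((InjOn.bijOn_image fun _ _ _ _ h => add_left_cancel (extendHeights_inj.1 h).1).comp
      hτ.bijOn).congr hcoordA.symm
  have hmeet {k a : X} (hk : k ∈ K) (ha : a ∈ A)
      (h : attachCoord b e A τ i s k = attachCoord b e A τ i s a) : k = a := by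
    have hkx : k = x := by
      rw [hcoordK hk, hcoordA ha, extendHeights_inj, ← hex] at h
      exact he.bijOn.injOn hk hx.1 h.2
    exact hbijA.injOn (hkx ▸ hx.2) ha h
  refine ⟨?_, ?_, .inl he.mem, ?_⟩
  · have hei : ContinuousOn (e · i) K := (continuous_apply i).comp_continuousOn he.continuousOn
    exact .union_of_isClosed
      ((continuousOn_extendHeights (hei.inf continuousOn_const) he.continuousOn).congr hcoordK)
      ((continuousOn_extendHeights (continuousOn_const.add hτ.continuousOn)
        continuousOn_const).congr hcoordA) hK hA
  · rw [branchTree_attachBranch hb h0 hs]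
    refine hbijK.union hbijA ?_
    rintro v (hv | hv) w (hw | hw) h
    exacts [hbijK.injOn hv hw h, hmeet hv hw h, (hmeet hw hv h.symm).symm, hbijA.injOn hv hw h]
  · simp only [hcoordK he.mem, he.root]
    exact funext fun
      | none => min_eq_left h0
      | some _ => rfl

end LocalChart

section ArcChart

/-- The branching heights of an arc of length one, rooted at distance `c` from an end point. -/
def arcBranching (c : ℝ) : Bool → Bool → ℝ
  | true, true => 1 - c
  | false, false => c
  | _, _ => 0

/-- The heights along both branches of the point of `[0, 1]` with coordinate `t`, where `c` is the
coordinate of the root. -/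
def arcHeights (c t : ℝ) : Bool → ℝ
  | true => max (t - c) 0
  | false => max (c - t) 0

variable {c : ℝ}

theorem isBranching_arcBranching (hc : c ∈ Icc (0 : ℝ) 1) : IsBranching (arcBranching c) where
  nonneg := by
    rintro (_ | _) (_ | _)
    exacts [hc.1, le_rfl, le_rfl, sub_nonneg.2 hc.2]
  symm := by
    rintro (_ | _) (_ | _) <;> rfl
  min_le := by
    rintro (_ | _) (_ | _) (_ | _) <;> simp [arcBranching, hc.1, hc.2]

theorem branchPoint_arcBranching_true {t : ℝ} (ht : t ∈ Icc 0 (1 - c)) :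
    branchPoint (arcBranching c) true t = arcHeights c (c + t) := by
  funext i
  cases i <;> simp [branchPoint, arcBranching, arcHeights, ht.1, ht.2]

theorem branchPoint_arcBranching_false {t : ℝ} (ht : t ∈ Icc 0 c) :
    branchPoint (arcBranching c) false t = arcHeights c (c - t) := by
  funext i
  cases i <;> simp [branchPoint, arcBranching, arcHeights, ht.1, ht.2]

theorem bijOn_arcHeights (hc : c ∈ Icc (0 : ℝ) 1) :
    BijOn (arcHeights c) (Icc 0 1) (branchTree (arcBranching c)) := by
  refine ⟨fun t ht => ?_, fun t _ t' _ h => ?_, ?_⟩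
  · rcases le_total c t with h | h
    · have htc : t - c ∈ Icc 0 (1 - c) := ⟨sub_nonneg.2 h, sub_le_sub_right ht.2 c⟩
      exact ⟨true, t - c, htc, by rw [branchPoint_arcBranching_true htc, add_sub_cancel]⟩
    · have htc : c - t ∈ Icc 0 c := ⟨sub_nonneg.2 h, sub_le_self c ht.1⟩
      exact ⟨false, c - t, htc, by rw [branchPoint_arcBranching_false htc, sub_sub_cancel]⟩
  · have htrue : max (t - c) 0 = max (t' - c) 0 := congrFun h true
    have hfalse : max (c - t) 0 = max (c - t') 0 := congrFun h false
    grind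
  · rintro _ ⟨_ | _, t, ht, rfl⟩
    · have htc : t ≤ c := ht.2
      exact ⟨c - t, ⟨sub_nonneg.2 htc, by linarith [ht.1, hc.2]⟩,
        (branchPoint_arcBranching_false ht).symm⟩
    · have htc : t ≤ 1 - c := ht.2
      exact ⟨c + t, ⟨by linarith [ht.1, hc.1], by linarith⟩,
        (branchPoint_arcBranching_true ht).symm⟩

theorem continuous_arcHeights (c : ℝ) : Continuous (arcHeights c) :=
  continuous_pi fun
    | true => (continuous_sub_right c).max continuous_const
    | false => (continuous_sub_left c).max continuous_const

theorem arcHeights_self (c : ℝ) : arcHeights c c = 0 := by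
  funext i
  cases i <;> simp [arcHeights]

theorem IsArcCoord.isChartOn {X : Type*} [TopologicalSpace X] {A : Set X} {τ : X → ℝ}
    (hτ : IsArcCoord A τ) {p : X} (hp : p ∈ A) :
    IsChartOn A p (arcBranching (τ p)) (arcHeights (τ p) ∘ τ) where
  continuousOn := (continuous_arcHeights (τ p)).comp_continuousOn hτ.continuousOn
  bijOn := (bijOn_arcHeights (hτ.bijOn.mapsTo hp)).comp hτ.bijOn
  mem := hp
  root := arcHeights_self (τ p)

end ArcChart

section FiniteCover

variable {X : Type*} [TopologicalSpace X] [ConnectedSpace X] {𝒜 ℬ : Set (Set X)}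

theorem exists_mem_diff_inter_sUnion_nonempty (hfin : 𝒜.Finite) (hclosed : ∀ A ∈ 𝒜, IsClosed A)
    (hcover : ⋃₀ 𝒜 = univ) (hsub : ℬ ⊆ 𝒜) (hne : (⋃₀ ℬ).Nonempty) (huniv : ⋃₀ ℬ ≠ univ) :
    ∃ A ∈ 𝒜 \ ℬ, (⋃₀ ℬ ∩ A).Nonempty := by
  by_contra! hdisj
  have hcompl : (⋃₀ ℬ)ᶜ = ⋃₀ (𝒜 \ ℬ) := by
    have hinter : Disjoint (⋃₀ ℬ) (⋃₀ (𝒜 \ ℬ)) :=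
      disjoint_sUnion_right.2 fun A hA => disjoint_iff_inter_eq_empty.2 (hdisj A hA)
    have hunion : ⋃₀ ℬ ∪ ⋃₀ (𝒜 \ ℬ) = univ := by
      rw [← sUnion_union, union_sdiff_cancel hsub, hcover]
    exact (IsCompl.of_eq hinter.eq_bot hunion).compl_eq
  have hclosedUnion {𝒞 : Set (Set X)} (h𝒞 : 𝒞 ⊆ 𝒜) : IsClosed (⋃₀ 𝒞) :=
    sUnion_eq_biUnion ▸ (hfin.subset h𝒞).isClosed_biUnion fun A hA => hclosed A (h𝒞 hA)
  refine huniv (IsClopen.eq_univ ⟨hclosedUnion hsub, ?_⟩ hne)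
  rw [← isClosed_compl_iff, hcompl]
  exact hclosedUnion sdiff_subset

theorem sUnion_induction {P : Set X → Prop} (hfin : 𝒜.Finite) (hclosed : ∀ A ∈ 𝒜, IsClosed A)
    (hcover : ⋃₀ 𝒜 = univ) {A₀ : Set X} (hA₀ : A₀ ∈ 𝒜) (hne : A₀.Nonempty) (base : P A₀)
    (step : ∀ ℬ ⊆ 𝒜, ∀ A ∈ 𝒜 \ ℬ, (⋃₀ ℬ ∩ A).Nonempty → P (⋃₀ ℬ) → P (⋃₀ ℬ ∪ A)) :
    P univ := by
  have hfinite : {ℬ | ℬ ⊆ 𝒜 ∧ P (⋃₀ ℬ)}.Finite := hfin.finite_subsets.subset fun _ h => h.1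
  obtain ⟨ℬ, hle, ⟨hsub, hP⟩, hmax⟩ := hfinite.exists_le_maximal (a := {A₀})
    ⟨singleton_subset_iff.2 hA₀, (sUnion_singleton A₀).symm ▸ base⟩
  have hℬ : (⋃₀ ℬ).Nonempty := hne.mono (subset_sUnion_of_mem (singleton_subset_iff.1 hle))
  by_cases huniv : ⋃₀ ℬ = univ
  · exact huniv ▸ hP
  · obtain ⟨A, hA, hAℬ⟩ :=
      exists_mem_diff_inter_sUnion_nonempty hfin hclosed hcover hsub hℬ huniv
    refine absurd (hmax ⟨insert_subset hA.1 hsub, ?_⟩ (subset_insert A ℬ) (mem_insert A ℬ)) hA.2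
    rw [sUnion_insert, union_comm]
    exact step ℬ hsub A hA hAℬ hP

end FiniteCover

section TreeChart

/-- The subspace `K` is a tree with finitely many branches, rooted at `p`. -/
def HasChart {X : Type*} [TopologicalSpace X] (p : X) (K : Set X) : Prop :=
  ∃ (I : Type) (_ : Finite I) (b : I → I → ℝ) (e : X → I → ℝ), IsBranching b ∧ IsChartOn K p b e

theorem IsArcSet.hasChart {X : Type*} [TopologicalSpace X] {A : Set X} (hA : IsArcSet A) {p : X}
    (hp : p ∈ A) : HasChart p A := by
  obtain ⟨h⟩ := hA
  obtain ⟨τ, hτ, -⟩ := IsArcFromTo.exists_isArcCoord ⟨h.symm, rfl, rfl⟩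
  exact ⟨Bool, inferInstance, _, _, isBranching_arcBranching (hτ.bijOn.mapsTo hp), hτ.isChartOn hp⟩

theorem HasChart.union_arc {X : Type*} [TopologicalSpace X] [T2Space X]
    (hS : ∀ S : Set X, ¬ IsSimpleClosedCurve S) {p : X} {K A : Set X} (hK : HasChart p K)
    (hcK : IsCompact K) (hne : (K ∩ A).Nonempty) (hend : ∀ x ∈ K ∩ A, IsArcEndpoint A x) :
    HasChart p (K ∪ A) := by
  obtain ⟨I, _, b, e, hb, he⟩ := hK
  obtain ⟨x, hx⟩ := hne
  obtain ⟨y, hxy⟩ := hend x hx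
  have hKA : K ∩ A = {x} := by
    refine eq_singleton_iff_unique_mem.2 ⟨hx, fun z hz => by_contra fun hzx => ?_⟩
    obtain rfl : z = y := (hxy.eq_or_eq (hend z hz)).resolve_left hzx
    obtain ⟨B, hBK, hB⟩ := he.exists_isArcFromTo hb hcK hx.1 hz.1 (Ne.symm hzx)
    refine hS _ (hxy.isSimpleClosedCurve_union hB (Subset.antisymm (fun w hw => ?_) ?_))
    · exact hxy.eq_or_eq (hend w ⟨hBK hw.2, hw.1⟩)
    · rintro w (rfl | rfl)
      exacts [⟨hx.2, hB.left_mem⟩, ⟨hz.2, hB.right_mem⟩]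
  obtain ⟨i, s, hs, hex⟩ := he.bijOn.mapsTo hx.1
  obtain ⟨τ, hτ, hτx, -⟩ := hxy.exists_isArcCoord
  exact ⟨Option I, inferInstance, _, _, hb.attachBranch hs.1, he.attach hb hcK.isClosed
    hxy.isArcSet.isCompact.isClosed hτ hKA hτx hs.1 hs.2 hex⟩

theorem IsTree.hasChart {X : Type u} [MetricSpace X] (hX : IsTree X) (p : X) :
    HasChart p (univ : Set X) := by
  obtain ⟨⟨-, _, -, 𝒜, harc, hcover, hAint⟩, hS⟩ := hX
  obtain ⟨A₀, hA₀, hp⟩ : p ∈ ⋃₀ (𝒜 : Set (Set X)) := hcover ▸ mem_univ p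
  refine sUnion_induction 𝒜.finite_toSet (fun A hA => (harc A hA).isCompact.isClosed) hcover hA₀
    ⟨p, hp⟩ ((harc A₀ hA₀).hasChart hp) fun ℬ hℬ A hA hne hchart => ?_
  have hcompact : IsCompact (⋃₀ ℬ) := (𝒜.finite_toSet.subset hℬ).isCompact_sUnion fun B hB =>
    (harc B (hℬ hB)).isCompact
  refine hchart.union_arc hS hcompact hne ?_
  rintro x ⟨⟨B, hB, hxB⟩, hxA⟩
  exact (hAint A hA.1 B (hℬ hB) (fun h => hA.2 (h ▸ hB)) x ⟨hxA, hxB⟩).1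

end TreeChart

section Reduction

variable {X I : Type*} [TopologicalSpace X] {p : X} {b : I → I → ℝ} {e : X → I → ℝ} {i j : I}

theorem IsBranching.reindex {J : Type*} (hb : IsBranching b) (g : J → I) :
    IsBranching fun i j => b (g i) (g j) :=
  ⟨fun _ _ => hb.nonneg _ _, fun _ _ => hb.symm _ _, fun _ _ _ => hb.min_le _ _ _⟩

theorem IsSubtree.apply_eq_min (hb : IsBranching b) {y : I → ℝ} (hy : IsSubtree b y)
    (h : b i j = b i i) : y i = min (y j) (b i i) := by
  refine le_antisymm (le_min ?_ (hy.le_diag i)) ?_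
  · simpa only [h, min_eq_left (hy.le_diag i)] using hy.min_le i j
  · simpa only [hb.symm j i, h] using hy.min_le j i

theorem IsTreeChart.eraseBranch (hb : IsBranching b) (he : IsTreeChart p b e) (hij : i ≠ j)
    (h : b i j = b i i) : IsTreeChart p (fun k l : {k // k ≠ i} => b k l) fun x k => e x k where
  continuous := continuous_pi fun k => (continuous_apply k.1).comp he.continuous
  injective x y hxy := by
    refine he.injective (funext fun k => ?_)
    have hne (k : I) (hk : k ≠ i) : e x k = e y k := congrFun hxy ⟨k, hk⟩
    by_cases hk : k = i
    · rw [hk, (hb.isSubtree_of_mem_branchTree (he.mem_branchTree x)).apply_eq_min hb h,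
        (hb.isSubtree_of_mem_branchTree (he.mem_branchTree y)).apply_eq_min hb h, hne j hij.symm]
    · exact hne k hk
  range_eq := by
    ext z
    constructor
    · rintro ⟨x, rfl⟩
      obtain ⟨k, t, ht, hx⟩ := he.mem_branchTree x
      rcases eq_or_ne k i with rfl | hk
      · have hkj : b k k ≤ b j j := h ▸ hb.symm k j ▸ hb.le_diag j k
        rw [hb.branchPoint_congr (ht.2.trans_eq h.symm)] at hx
        exact ⟨⟨j, hij.symm⟩, t, ⟨ht.1, ht.2.trans hkj⟩, funext fun l => congrFun hx l⟩
      · exact ⟨⟨k, hk⟩, t, ht, funext fun l => congrFun hx l⟩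
    · rintro ⟨k, t, ht, rfl⟩
      obtain ⟨x, hx⟩ := he.range_eq.superset ⟨k.1, t, ht, rfl⟩
      exact ⟨x, funext fun l => congrFun hx l⟩
  root := funext fun k => congrFun he.root k

theorem IsTreeChart.diag_pos [Nontrivial X] [Subsingleton I] (hb : IsBranching b)
    (he : IsTreeChart p b e) (i : I) : 0 < b i i := by
  refine (hb.nonneg i i).lt_of_ne fun h0 => ?_
  have hzero (x : X) : e x = 0 := by
    obtain ⟨k, t, ht, hx⟩ := he.mem_branchTree x
    rw [Subsingleton.elim k i, ← h0, Icc_self] at ht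
    rw [hx, mem_singleton_iff.1 ht, hb.branchPoint_zero]
  obtain ⟨x, y, hxy⟩ := exists_pair_ne X
  exact hxy (he.injective ((hzero x).trans (hzero y).symm))

theorem IsTreeChart.isReducedBranching [Nontrivial X] (hb : IsBranching b)
    (he : IsTreeChart p b e) (hlt : ∀ i j, i ≠ j → b i j < b i i) : IsReducedBranching b where
  toIsBranching := hb
  lt_diag := hlt
  pos i := by
    rcases subsingleton_or_nontrivial I with _ | _
    · exact he.diag_pos hb i
    · obtain ⟨j, hj⟩ := exists_ne i
      exact (hb.nonneg i j).trans_lt (hlt i j hj.symm)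

theorem IsTreeChart.exists_reduced [Nontrivial X] {I : Type} [Finite I] {b : I → I → ℝ}
    {e : X → I → ℝ} (hb : IsBranching b) (he : IsTreeChart p b e) :
    ∃ (I : Type) (_ : Finite I) (b : I → I → ℝ) (e : X → I → ℝ),
      IsReducedBranching b ∧ IsTreeChart p b e := by
  induction hn : Nat.card I using Nat.strong_induction_on generalizing I with
  | _ n ih =>
    by_cases! hlt : ∀ i j, i ≠ j → b i j < b i i
    · exact ⟨I, inferInstance, b, e, he.isReducedBranching hb hlt, he⟩
    · obtain ⟨i, j, hij, h⟩ := hlt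
      have hcard : Nat.card {k // k ≠ i} < n := hn ▸ Finite.card_subtype_lt (not_not.2 rfl)
      exact ih _ hcard (hb.reindex Subtype.val)
        (he.eraseBranch hb hij ((hb.le_diag i j).antisymm h)) rfl

theorem IsTree.nontrivial {X : Type u} [MetricSpace X] (hX : IsTree X) : Nontrivial X := by
  obtain ⟨⟨-, -, ⟨p⟩, 𝒜, harc, hcover, -⟩, -⟩ := hX
  obtain ⟨A, hA, -⟩ : p ∈ ⋃₀ (𝒜 : Set (Set X)) := hcover ▸ mem_univ p
  obtain ⟨h⟩ := harc A hA
  exact (Subtype.val_injective.comp h.symm.injective).nontrivial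

theorem IsTree.exists_reducedChart {X : Type u} [MetricSpace X] (hX : IsTree X) (p : X) :
    ∃ (I : Type) (_ : Finite I) (b : I → I → ℝ) (e : X → I → ℝ),
      IsReducedBranching b ∧ IsTreeChart p b e := by
  have := hX.nontrivial
  obtain ⟨I, _, b, e, hb, he⟩ := hX.hasChart p
  exact he.isTreeChart.exists_reduced hb

end Reduction

theorem statement19 {X : Type u} [MetricSpace X] (hX : IsTree X) (p : X) :
    UniqueHyperspaceInTrees X p := by
  rintro Y _ hY q ⟨H⟩
  have := hX.1.1
  have := hY.1.1
  obtain ⟨I, _, b, e, hb, he⟩ := hX.exists_reducedChart p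
  obtain ⟨J, _, b', e', hb', he'⟩ := hY.exists_reducedChart q
  obtain ⟨HX⟩ := he.nonempty_homeomorph_CP hb.toIsBranching
  obtain ⟨HY⟩ := he'.nonempty_homeomorph_CP hb'.toIsBranching
  obtain ⟨g, hle, hzero⟩ :=
    exists_equiv_of_homeomorph_subtreeSpace hb hb' ((HX.trans H).trans HY.symm)
  have hbg := hb'.toIsBranching.reindex g
  have hchart := (he'.reindex g).rescale hbg
  rw [← normHeight_congr hb.nonneg hbg.nonneg hle hzero] at hchart
  exact (he.rescale hb.toIsBranching).exists_homeomorph hchart
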